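/- arXiv:1612.08439 — 2 statements merged into one kernel-verified Lean document; each statement's English description precedes it below -/
import Mathlib

section
/- Let f be a homeomorphism of the open annulus 𝔸 = 𝕋¹ × ℝ which is isotopic to the identity and preserves a Borel probability measure of full support, and let f̌ be a lift of f to ℝ². If the rotation set rot(f̌) is reduced to a single rational number r/s, where r and s are integers with s ≥ 1 and gcd(|r|, s) = 1, then there exists a point ž ∈ ℝ² with f̌^s(ž) = ž + (r,0). -/
open MeasureTheory Filter Topology Set

noncomputable section

/-- The circle `𝕋¹ = ℝ/ℤ`. -/
abbrev T1 : Type := AddCircle (1 : ℝ)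

/-- The open annulus `𝔸 = 𝕋¹ × ℝ`. -/
abbrev Ann : Type := T1 × ℝ

/-- The universal covering map `π : ℝ² → 𝔸`, `π(x,y) = (x + ℤ, y)`. -/
def pA : ℝ × ℝ → Ann := fun z => ((z.1 : T1), z.2)

/-- An open topological disk of `𝔸`: a nonempty open connected simply connected subset. -/
def IsOpenTopDisk (U : Set Ann) : Prop :=
  IsOpen U ∧ IsConnected U ∧ SimplyConnectedSpace U

/-- `f` is isotopic to the identity. -/
def IsotopicToId (f : Ann ≃ₜ Ann) : Prop :=
  ∃ H : ℝ × Ann → Ann, ContinuousOn H (Set.Icc (0:ℝ) 1 ×ˢ Set.univ) ∧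
    (∀ z, H (0, z) = z) ∧ (∀ z, H (1, z) = f z) ∧
    ∀ t ∈ Set.Icc (0:ℝ) 1, ∃ g : Ann ≃ₜ Ann, ∀ z, H (t, z) = g z

/-- `μ` is an `f`-invariant Borel probability measure of full support. -/
def InvariantFullMeasure (f : Ann ≃ₜ Ann) (μ : Measure Ann) : Prop :=
  IsProbabilityMeasure μ ∧ Measure.map f μ = μ ∧
    ∀ U : Set Ann, IsOpen U → U.Nonempty → 0 < μ U

/-- `fc` is a lift of `f` to the universal covering `ℝ²`. -/
def IsLift (f : Ann ≃ₜ Ann) (fc : (ℝ × ℝ) ≃ₜ (ℝ × ℝ)) : Prop :=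
  ∀ z, pA (fc z) = f (pA z)

/-- The rotation set of `fc` relative to a compact set `K`. -/
def rotK (fc : (ℝ × ℝ) ≃ₜ (ℝ × ℝ)) (K : Set Ann) : Set EReal :=
  {ρ | ∃ (z : ℕ → ℝ × ℝ) (n : ℕ → ℕ), Tendsto n atTop atTop ∧
    (∀ k, pA (z k) ∈ K ∧ pA ((⇑fc)^[n k] (z k)) ∈ K) ∧
    Tendsto (fun k => (((((⇑fc)^[n k] (z k)).1 - (z k).1) / (n k) : ℝ) : EReal))
      atTop (nhds ρ)}

/-- The rotation set of `fc`. -/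
def rot (fc : (ℝ × ℝ) ≃ₜ (ℝ × ℝ)) : Set EReal :=
  closure (⋃ (K : Set Ann) (_ : IsCompact K), rotK fc K)

/-- Alternative `(1)` in Theorems A and B: existence of non-contractible
periodic points of arbitrarily large prime period. -/
def NonContractibleAlt (fc : (ℝ × ℝ) ≃ₜ (ℝ × ℝ)) : Prop :=
  ∃ q : ℕ, 1 ≤ q ∧ ∀ r s : ℕ, 0 < r → 0 < s → Nat.Coprime r s → (r : ℝ) / s ≤ 1 / q →
    (∃ z : ℝ × ℝ, (⇑fc)^[s] z + ((r : ℝ), 0) = z) ∨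
    (∃ z : ℝ × ℝ, (⇑fc)^[s] z - ((r : ℝ), 0) = z)

/-!
The map `g = f̌^s - (r, 0)` commutes with deck translations, and since `rot(f̌) = {r/s}` its orbit
segments that start and end over a given compact set have sublinear horizontal displacement.
A lift of a point of the support of `μ` is nonwandering for `g`: otherwise an orbit would visit each
deck translate of some ball at most once, hence would make only sublinearly many visits to the
projection of the ball, whereas invariance of `μ` forces linearly many.

It remains to find a fixed point of a plane homeomorphism `G`, isotopic to the identity, that has a
nonwandering point. If `G` had no fixed point, composing it with a push inside a ball disjoint from
its image would give a fixed-point-free map with a periodic point. The orbit of a translation arc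
through that point closes up to a loop, parametrized so that `G` acts as `t ↦ t + 1`. The logarithm
of the chords of the loop changes by an odd multiple of `iπ` between the chord from the base point
to a point of the loop and the chord back. This half turn is the same for the image loop, because
`log ((G y - G x) / (y - x))` is symmetric in `x` and `y`; but transporting it along the loop by
means of a logarithm of `G z - z`, which is globally defined on the plane, shows that it vanishes.
-/

section Logarithm

variable {X Y : Type*} [TopologicalSpace X] [TopologicalSpace Y]

/-- `L` is a continuous branch of the complex logarithm of `F` on the set `S`; nothing is required
of the values of `L` outside `S`. -/
structure IsLogOn (L F : X → ℂ) (S : Set X) : Prop where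
  continuousOn : ContinuousOn L S
  exp_eq : ∀ a ∈ S, Complex.exp (L a) = F a

namespace IsLogOn

variable {L L' F F' : X → ℂ} {S : Set X}

theorem comp (hL : IsLogOn L F S) {φ : Y → X} {S' : Set Y} (hφ : ContinuousOn φ S')
    (hmaps : MapsTo φ S' S) : IsLogOn (L ∘ φ) (F ∘ φ) S' :=
  ⟨hL.continuousOn.comp hφ hmaps, fun _ ha => hL.exp_eq _ (hmaps ha)⟩

theorem add (hL : IsLogOn L F S) (hL' : IsLogOn L' F' S) : IsLogOn (L + L') (F * F') S :=
  ⟨hL.continuousOn.add hL'.continuousOn, fun a ha => by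
    simp only [Pi.add_apply, Pi.mul_apply, Complex.exp_add, hL.exp_eq a ha, hL'.exp_eq a ha]⟩

theorem congr (hL : IsLogOn L F S) (hF : EqOn F F' S) : IsLogOn L F' S :=
  ⟨hL.continuousOn, fun a ha => (hL.exp_eq a ha).trans (hF ha)⟩

theorem sub_eq_sub (hL : IsLogOn L F S) (hL' : IsLogOn L' F' S) (hS : IsPreconnected S) {C : ℂ}
    (hC : ∀ a ∈ S, F a = C * F' a) {a b : X} (ha : a ∈ S) (hb : b ∈ S) :
    L a - L' a = L b - L' b := by
  have exp_sub : ∀ a ∈ S, Complex.exp (L a - L' a) = C := fun a ha => by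
    rw [Complex.exp_sub, hL.exp_eq a ha, hC a ha, ← hL'.exp_eq a ha,
      mul_div_cancel_right₀ _ (Complex.exp_ne_zero _)]
  refine Complex.isCoveringMap_exp.constOn_of_comp hS
    (hL.continuousOn.sub hL'.continuousOn) (fun a ha b hb => Subtype.ext ?_) ha hb
  exact (exp_sub a ha).trans (exp_sub b hb).symm

end IsLogOn

theorem exists_isLogOn_of_homotopy {S : Set X} {H : unitInterval × X → ℂ}
    (hH : ContinuousOn H (univ ×ˢ S)) (hne : ∀ t, ∀ a ∈ S, H (t, a) ≠ 0) {L₀ : X → ℂ}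
    (hL₀ : IsLogOn L₀ (fun a => H (0, a)) S) :
    ∃ L, IsLogOn L H (univ ×ˢ S) ∧ ∀ a ∈ S, L (0, a) = L₀ a := by
  classical
  let HS : C(unitInterval × S, {z : ℂ // z ≠ 0}) :=
    ⟨fun p => ⟨H (p.1, p.2), hne p.1 p.2 p.2.2⟩,
      (hH.comp_continuous (by fun_prop) fun p => ⟨trivial, p.2.2⟩).subtype_mk _⟩
  let L₀S : C(S, ℂ) := ⟨S.domRestrict L₀, hL₀.continuousOn.domRestrict⟩
  have hzero : ∀ a, HS (0, a) = (⟨Complex.exp (L₀S a), Complex.exp_ne_zero _⟩ : {z : ℂ // z ≠ 0}) :=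
    fun a => Subtype.ext (hL₀.exp_eq a a.2).symm
  let LS := Complex.isCoveringMap_exp.liftHomotopy HS L₀S hzero
  have exp_LS : ∀ p, Complex.exp (LS p) = HS p := fun p =>
    congrArg Subtype.val (congrFun (Complex.isCoveringMap_exp.liftHomotopy_lifts HS L₀S hzero) p)
  have LS_zero : ∀ a, LS (0, a) = L₀ a := Complex.isCoveringMap_exp.liftHomotopy_zero HS L₀S hzero
  let L : unitInterval × X → ℂ := fun p => if h : p.2 ∈ S then LS (p.1, ⟨p.2, h⟩) else 0
  have L_eq : ∀ t, ∀ a (ha : a ∈ S), L (t, a) = LS (t, ⟨a, ha⟩) := fun t a ha => dif_pos ha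
  refine ⟨L, ⟨?_, ?_⟩, fun a ha => (L_eq 0 a ha).trans (LS_zero ⟨a, ha⟩)⟩
  · rw [continuousOn_iff_continuous_domRestrict]
    have hrestrict : (univ ×ˢ S).domRestrict L = fun p => LS (p.1.1, ⟨p.1.2, p.2.2⟩) :=
      funext fun p => L_eq p.1.1 p.1.2 p.2.2
    rw [hrestrict]
    exact LS.continuous.comp (by fun_prop)
  · rintro ⟨t, a⟩ ⟨-, ha⟩
    exact (congrArg Complex.exp (L_eq t a ha)).trans (exp_LS _)

theorem exists_isLogOn_of_convex {E : Type*} [NormedAddCommGroup E] [NormedSpace ℝ E] {S : Set E}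
    (hS : Convex ℝ S) {F : E → ℂ} (hF : ContinuousOn F S) (hne : ∀ a ∈ S, F a ≠ 0) :
    ∃ L, IsLogOn L F S := by
  obtain rfl | ⟨a₀, ha₀⟩ := S.eq_empty_or_nonempty
  · exact ⟨0, continuousOn_empty _, fun a ha => ha.elim⟩
  let contraction : unitInterval × E → E := fun p => a₀ + (p.1 : ℝ) • (p.2 - a₀)
  have hmaps : MapsTo contraction (univ ×ˢ S) S := fun p hp =>
    hS.add_smul_sub_mem ha₀ hp.2 p.1.2
  have hconst : IsLogOn (fun _ : E => Complex.log (F a₀))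
      (fun a => (F ∘ contraction) ((0 : unitInterval), a)) S :=
    ⟨continuousOn_const, fun a _ => by simp [contraction, Complex.exp_log (hne a₀ ha₀)]⟩
  obtain ⟨L, hL, -⟩ := exists_isLogOn_of_homotopy (hF.comp (by fun_prop) hmaps)
    (fun t a ha => hne _ (hmaps (x := (t, a)) ⟨trivial, ha⟩)) hconst
  refine ⟨_, (hL.comp (φ := fun a => ((1 : unitInterval), a)) (S' := S) (by fun_prop)
    fun a ha => ⟨trivial, ha⟩).congr fun a _ => ?_⟩
  simp [contraction]

end Logarithm

section SymmLogSlope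

/-- The slope `(g y - g x) / (y - x)` of the planar map `g` has a continuous logarithm on pairs of
distinct points which is symmetric in the two points. Its imaginary part measures by how much `g`
turns the vector from `x` to `y`. Plane homeomorphisms isotopic to the identity have this
property, and it is the only trace of the isotopy that the proof retains. -/
def HasSymmLogSlope (g : ℂ → ℂ) : Prop :=
  ∃ R : ℂ × ℂ → ℂ, IsLogOn R (fun p => slope g p.1 p.2) (diagonal ℂ)ᶜ ∧
    ∀ x y, x ≠ y → R (x, y) = R (y, x)

namespace HasSymmLogSlope

variable {f g : ℂ → ℂ}

theorem id : HasSymmLogSlope id :=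
  ⟨0, ⟨continuousOn_const, fun p hp => by
    simp [slope_def_field, div_self (sub_ne_zero.2 (Ne.symm hp))]⟩, fun _ _ _ => rfl⟩

theorem add_const (hg : HasSymmLogSlope g) (w : ℂ) : HasSymmLogSlope fun z => g z + w := by
  simpa only [HasSymmLogSlope, slope_def_field, add_sub_add_right_eq_sub] using hg

theorem comp (hf : HasSymmLogSlope f) (hg : HasSymmLogSlope g) (hgc : Continuous g)
    (hgi : Function.Injective g) : HasSymmLogSlope (f ∘ g) := by
  obtain ⟨R, hR, R_symm⟩ := hf
  obtain ⟨Q, hQ, Q_symm⟩ := hg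
  have hRg := hR.comp (φ := Prod.map g g) (S' := (diagonal ℂ)ᶜ) (by fun_prop)
    fun p hp h => hp (hgi h)
  refine ⟨_, (hRg.add hQ).congr fun p hp => ?_, fun x y hxy => ?_⟩
  · have hne : g p.2 - g p.1 ≠ 0 := sub_ne_zero.2 fun h => hp (hgi h).symm
    simp [slope_def_field, div_mul_div_cancel₀ hne]
  · simp [R_symm _ _ (hgi.ne hxy), Q_symm x y hxy]

theorem iterate (hg : HasSymmLogSlope g) (hgc : Continuous g) (hgi : Function.Injective g) :
    ∀ n : ℕ, HasSymmLogSlope g^[n]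
  | 0 => .id
  | n + 1 => (hg.iterate hgc hgi n).comp hg hgc hgi

theorem id_add_of_lipschitzWith {u : ℂ → ℂ} {K : NNReal} (hu : LipschitzWith K u) (hK : K < 1) :
    HasSymmLogSlope fun v => v + u v := by
  have slope_eq : ∀ x y, x ≠ y → slope (fun v => v + u v) x y = 1 + slope u x y := fun x y h => by
    have hne : y - x ≠ 0 := sub_ne_zero.2 h.symm
    simp only [slope_def_field]
    field_simp
    ring
  have norm_slope_lt : ∀ x y, ‖slope u x y‖ < 1 := fun x y => by
    rw [slope_def_field, norm_div]
    refine (div_le_of_le_mul₀ (norm_nonneg _) K.2 ?_).trans_lt hK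
    exact hu.norm_sub_le y x
  have mem_slitPlane : ∀ p ∈ (diagonal ℂ)ᶜ, slope (fun v => v + u v) p.1 p.2 ∈ Complex.slitPlane :=
    fun p hp => by
      rw [slope_eq _ _ hp]
      exact Complex.mem_slitPlane_of_norm_lt_one (norm_slope_lt _ _)
  have continuousOn_slope :
      ContinuousOn (fun p : ℂ × ℂ => slope (fun v => v + u v) p.1 p.2) (diagonal ℂ)ᶜ := by
    have := hu.continuous
    simp only [slope_def_field]
    exact ContinuousOn.div (by fun_prop) (by fun_prop) fun p hp => sub_ne_zero.2 (Ne.symm hp)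
  exact ⟨_, ⟨continuousOn_slope.clog mem_slitPlane, fun p hp =>
    Complex.exp_log (Complex.slitPlane_ne_zero (mem_slitPlane p hp))⟩,
    fun x y _ => congrArg Complex.log (slope_comm _ x y)⟩

theorem of_isotopy {h : unitInterval × ℂ → ℂ} (hh : Continuous h) (h_zero : ∀ z, h (0, z) = z)
    (h_inj : ∀ t, Function.Injective fun z => h (t, z)) : HasSymmLogSlope fun z => h (1, z) := by
  let σ : unitInterval × (ℂ × ℂ) → ℂ := fun p => slope (fun z => h (p.1, z)) p.2.1 p.2.2
  have hσ : ContinuousOn σ (univ ×ˢ (diagonal ℂ)ᶜ) := by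
    simp only [σ, slope_def_field]
    exact ContinuousOn.div (by fun_prop) (by fun_prop) fun p hp => sub_ne_zero.2 (Ne.symm hp.2)
  have σ_zero : IsLogOn 0 (fun p => σ (0, p)) (diagonal ℂ)ᶜ :=
    ⟨continuousOn_const, fun p hp => by
      simp [σ, h_zero, slope_def_field, div_self (sub_ne_zero.2 (Ne.symm hp))]⟩
  obtain ⟨L, hL, L_zero⟩ := exists_isLogOn_of_homotopy hσ
    (fun t p hp => slope_eq_zero_iff.not.2 fun he => hp (h_inj t he)) σ_zero
  refine ⟨fun p => L (1, p), hL.comp (φ := fun p => ((1 : unitInterval), p)) (by fun_prop)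
    fun p hp => ⟨trivial, hp⟩, fun x y hxy => ?_⟩
  have track : ∀ x y, x ≠ y → IsLogOn (fun t => L (t, (x, y))) (fun t => σ (t, (x, y))) univ :=
    fun x y h => hL.comp (φ := fun t => (t, (x, y))) (by fun_prop) fun t _ => ⟨trivial, h⟩
  have h_sub := (track x y hxy).sub_eq_sub (track y x hxy.symm) isPreconnected_univ (C := 1)
    (fun t _ => by rw [one_mul]; exact slope_comm _ x y) (mem_univ 1) (mem_univ 0)
  rw [L_zero _ hxy, L_zero _ hxy.symm, Pi.zero_apply, Pi.zero_apply, sub_self] at h_sub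
  exact sub_eq_zero.1 h_sub

end HasSymmLogSlope

end SymmLogSlope

section TranslationLoop

/-- The parameter pairs `s < t` in the window `[a, a + T]`, except for the pair `(a, a + T)`: the
chords of a closed curve of period `T` that is injective on the window have distinct endpoints. -/
def chords (a T : ℝ) : Set (ℝ × ℝ) :=
  {p | a ≤ p.1 ∧ p.2 ≤ a + T ∧ p.2 - p.1 ∈ Ioo 0 T}

/-- The chord vector of the curve `γ` from the parameter `p.1` to the parameter `p.2`. -/
def chord (γ : ℝ → ℂ) (p : ℝ × ℝ) : ℂ :=
  γ p.2 - γ p.1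

/-- The orbit `γ` of a translation arc of `G`, parametrized so that `G` acts as `t ↦ t + 1`,
closes up for the first time at `T`. The last condition excludes collisions between the two arcs
on which `γ` and its image `G ∘ γ` overlap when `T < 2`. -/
structure IsTranslationLoop (G : ℂ → ℂ) (γ : ℝ → ℂ) (T : ℝ) : Prop where
  continuous : Continuous γ
  map_add_one : ∀ t, γ (t + 1) = G (γ t)
  one_lt : 1 < T
  closed : γ T = γ 0
  ne_of_mem_chords : ∀ p ∈ chords 0 T, γ p.1 ≠ γ p.2
  ne_of_mem_box : ∀ p ∈ Icc (T - 1) 1 ×ˢ Icc T 2, γ p.1 ≠ γ p.2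

theorem convex_chords (a T : ℝ) : Convex ℝ (chords a T) :=
  ((convex_Ici a).linear_preimage (LinearMap.fst ℝ ℝ ℝ)).inter <|
    ((convex_Iic (a + T)).linear_preimage (LinearMap.snd ℝ ℝ ℝ)).inter <|
      (convex_Ioo 0 T).linear_preimage (LinearMap.snd ℝ ℝ ℝ - LinearMap.fst ℝ ℝ ℝ)

theorem exists_isLogOn_chord {γ : ℝ → ℂ} (hγ : Continuous γ) {S : Set (ℝ × ℝ)} (hS : Convex ℝ S)
    (hne : ∀ p ∈ S, γ p.1 ≠ γ p.2) : ∃ L, IsLogOn L (chord γ) S :=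
  exists_isLogOn_of_convex hS (by unfold chord; fun_prop) fun p hp => sub_ne_zero.2 (hne p hp).symm

section ClosedCurve

variable {γ : ℝ → ℂ} {T : ℝ} {L : ℝ × ℝ → ℂ}

theorem mem_chords_left {s : ℝ} (hs : s ∈ Ioo 0 T) : (0, s) ∈ chords 0 T :=
  ⟨le_rfl, by simpa using hs.2.le, by simpa using hs⟩

theorem mem_chords_right {s : ℝ} (hs : s ∈ Ioo 0 T) : (s, T) ∈ chords 0 T :=
  ⟨hs.1.le, by simp, by simpa using hs.2, by simpa using hs.1⟩

theorem chord_right_eq_neg_chord_left (closed : γ T = γ 0) (s : ℝ) :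
    chord γ (s, T) = -1 * chord γ (0, s) := by
  simp [chord, closed]

theorem half_turn_eq (hL : IsLogOn L (chord γ) (chords 0 T)) (closed : γ T = γ 0)
    {s t : ℝ} (hs : s ∈ Ioo 0 T) (ht : t ∈ Ioo 0 T) :
    L (s, T) - L (0, s) = L (t, T) - L (0, t) :=
  (hL.comp (by fun_prop) fun _ => mem_chords_right).sub_eq_sub
    (hL.comp (by fun_prop) fun _ => mem_chords_left) isPreconnected_Ioo
    (fun s _ => chord_right_eq_neg_chord_left closed s) hs ht

theorem exp_half_turn (hL : IsLogOn L (chord γ) (chords 0 T)) (closed : γ T = γ 0) {s : ℝ}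
    (hs : s ∈ Ioo 0 T) : Complex.exp (L (s, T) - L (0, s)) = -1 := by
  have hleft := hL.exp_eq _ (mem_chords_left hs)
  rw [Complex.exp_sub, hL.exp_eq _ (mem_chords_right hs), hleft,
    chord_right_eq_neg_chord_left closed, mul_div_cancel_right₀]
  exact hleft ▸ Complex.exp_ne_zero _

end ClosedCurve

section Equivariant

variable {G : ℂ → ℂ} {γ : ℝ → ℂ} {T : ℝ} {L : ℝ × ℝ → ℂ}

theorem isLogOn_chord_shift (hγ : Continuous γ) (map_add_one : ∀ t, γ (t + 1) = G (γ t))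
    (ne_of_mem_chords : ∀ p ∈ chords 0 T, γ p.1 ≠ γ p.2) (hL : IsLogOn L (chord γ) (chords 0 T))
    {R : ℂ × ℂ → ℂ} (hR : IsLogOn R (fun p => slope G p.1 p.2) (diagonal ℂ)ᶜ) :
    IsLogOn (fun p => L (p.1 - 1, p.2 - 1) + R (γ (p.1 - 1), γ (p.2 - 1)))
      (chord γ) (chords 1 T) := by
  have hmaps : MapsTo (fun p : ℝ × ℝ => (p.1 - 1, p.2 - 1)) (chords 1 T) (chords 0 T) :=
    fun p hp => ⟨by linarith [hp.1], by linarith [hp.2.1], by simpa using hp.2.2⟩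
  refine ((hL.comp (by fun_prop) hmaps).add <| hR.comp
    (φ := fun p : ℝ × ℝ => (γ (p.1 - 1), γ (p.2 - 1))) (by fun_prop)
    fun p hp => ne_of_mem_chords _ (hmaps hp)).congr fun p hp => ?_
  have hγ1 : ∀ t, γ t = G (γ (t - 1)) := fun t => by rw [← map_add_one, sub_add_cancel]
  have hne := sub_ne_zero.2 (ne_of_mem_chords _ (hmaps hp)).symm
  simp only [Pi.mul_apply, Function.comp_apply, chord, slope_def_field, hγ1 p.1, hγ1 p.2]
  exact mul_div_cancel₀ _ hne

theorem translation_log_sub_eq (hγ : Continuous γ) (map_add_one : ∀ t, γ (t + 1) = G (γ t))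
    {θ : ℂ → ℂ} (hθ : IsLogOn θ (fun z => G z - z) univ) {S : Set (ℝ × ℝ)}
    (hL : IsLogOn L (chord γ) S) {a b : ℝ} (hab : a ≤ b) (hS : ∀ t ∈ Icc a b, (t, t + 1) ∈ S) :
    θ (γ a) - L (a, a + 1) = θ (γ b) - L (b, b + 1) :=
  (hθ.comp hγ.continuousOn fun _ _ => trivial).sub_eq_sub (hL.comp (by fun_prop) hS)
    isPreconnected_Icc (C := 1) (fun t _ => by simp [chord, map_add_one])
    (left_mem_Icc.2 hab) (right_mem_Icc.2 hab)

end Equivariant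

namespace IsTranslationLoop

variable {G : ℂ → ℂ} {γ : ℝ → ℂ} {T : ℝ} {θ : ℂ → ℂ} {L L' : ℝ × ℝ → ℂ}

theorem gluing_of_two_le (hγ : IsTranslationLoop G γ T) (hθ : IsLogOn θ (fun z => G z - z) univ)
    (hL : IsLogOn L (chord γ) (chords 0 T)) (hL' : IsLogOn L' (chord γ) (chords 1 T))
    (hT : 2 ≤ T) :
    θ (γ 1) - L' (1, 2) - (θ (γ 0) - L (0, 1)) = L (1, T) - L' (1, T) := by
  have along_L := translation_log_sub_eq hγ.continuous hγ.map_add_one hθ hL zero_le_one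
    fun t ht => ⟨ht.1, by linarith [ht.2], by simpa using hγ.one_lt⟩
  have along_row := (hL.comp (φ := fun t => (1, t)) (S' := Ioc 1 T) (by fun_prop) fun t ht =>
      ⟨zero_le_one, by linarith [ht.2], by linarith [ht.1], by linarith [ht.2]⟩).sub_eq_sub
    (hL'.comp (φ := fun t => (1, t)) (by fun_prop)
      fun t ht => ⟨le_rfl, by linarith [ht.2], by linarith [ht.1], by linarith [ht.2]⟩)
    isPreconnected_Ioc (fun _ _ => (one_mul _).symm) (a := 2) (b := T)
    ⟨one_lt_two, hT⟩ ⟨hγ.one_lt, le_rfl⟩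
  norm_num at along_L along_row
  linear_combination along_row - along_L

theorem gluing_of_lt_two (hγ : IsTranslationLoop G γ T) (hθ : IsLogOn θ (fun z => G z - z) univ)
    (hL : IsLogOn L (chord γ) (chords 0 T)) (hL' : IsLogOn L' (chord γ) (chords 1 T))
    (hT : T < 2) :
    θ (γ 1) - L' (1, 2) - (θ (γ 0) - L (0, 1)) = L (1, T) - L' (1, T) := by
  have one_lt := hγ.one_lt
  have hT' : T - 1 ≤ 1 := by linarith
  obtain ⟨Lbox, hLbox⟩ := exists_isLogOn_chord hγ.continuous
    ((convex_Icc (T - 1) 1).prod (convex_Icc T 2)) hγ.ne_of_mem_box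
  have along_L := translation_log_sub_eq hγ.continuous hγ.map_add_one hθ hL
    (by linarith : 0 ≤ T - 1) fun t ht => ⟨ht.1, by linarith [ht.2], by simpa using one_lt⟩
  have along_box := translation_log_sub_eq hγ.continuous hγ.map_add_one hθ hLbox hT'
    fun t ht => ⟨ht, by linarith [ht.1], by linarith [ht.2]⟩
  have along_side := (hL.comp (φ := fun s => (s, T)) (S' := Icc (T - 1) 1) (by fun_prop)
      fun s hs => mem_chords_right ⟨by linarith [hs.1], by linarith [hs.2]⟩).sub_eq_sub
    (hLbox.comp (φ := fun s => (s, T)) (by fun_prop) fun s hs => ⟨hs, le_rfl, hT.le⟩)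
    isPreconnected_Icc (fun _ _ => (one_mul _).symm) (left_mem_Icc.2 hT') (right_mem_Icc.2 hT')
  have along_row := (hL'.comp (φ := fun t => (1, t)) (S' := Icc T 2) (by fun_prop)
      fun t ht => ⟨le_rfl, by linarith [ht.2], by linarith [ht.1], by linarith [ht.2]⟩).sub_eq_sub
    (hLbox.comp (φ := fun t => (1, t)) (by fun_prop) fun t ht => ⟨⟨hT', le_rfl⟩, ht⟩)
    isPreconnected_Icc (fun _ _ => (one_mul _).symm) (left_mem_Icc.2 hT.le) (right_mem_Icc.2 hT.le)
  simp only [Function.comp_apply, sub_add_cancel, zero_add, one_add_one_eq_two]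
    at along_L along_box along_side along_row
  linear_combination along_row - along_box - along_L + along_side

end IsTranslationLoop

theorem HasSymmLogSlope.not_isTranslationLoop {G : ℂ → ℂ} (hG : HasSymmLogSlope G)
    (hGc : Continuous G) (hfix : ∀ z, G z ≠ z) {γ : ℝ → ℂ} {T : ℝ} :
    ¬ IsTranslationLoop G γ T := fun hγ => by
  obtain ⟨R, hR, R_symm⟩ := hG
  have one_lt := hγ.one_lt
  obtain ⟨L, hL⟩ := exists_isLogOn_chord hγ.continuous (convex_chords 0 T) hγ.ne_of_mem_chords
  obtain ⟨θ, hθ⟩ := exists_isLogOn_of_convex (F := fun z => G z - z) convex_univ (by fun_prop)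
    fun z _ => sub_ne_zero.2 (hfix z)
  have hL' := isLogOn_chord_shift hγ.continuous hγ.map_add_one hγ.ne_of_mem_chords hL hR
  set L' : ℝ × ℝ → ℂ := fun p => L (p.1 - 1, p.2 - 1) + R (γ (p.1 - 1), γ (p.2 - 1)) with L'_def
  -- The half turn `M` of the closed curve, computed at two parameters; symmetry of `R` makes it
  -- invariant under `G`.
  let M := L (1, T) - L (0, 1)
  have M_ne_zero : M ≠ 0 := fun h => by
    have := exp_half_turn hL hγ.closed ⟨one_pos, one_lt⟩
    rw [show L (1, T) - L (0, 1) = 0 from h, Complex.exp_zero] at this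
    norm_num at this
  have M_shift : L' (T, T + 1) - L' (1, T) = M := by
    have hne : γ 0 ≠ γ (T - 1) := hγ.ne_of_mem_chords (0, T - 1) (mem_chords_left (by grind))
    have hM := half_turn_eq hL hγ.closed (s := T - 1) (by grind) ⟨one_pos, one_lt⟩
    simp only [L'_def, add_sub_cancel_right, sub_self, hγ.closed, R_symm _ _ hne]
    linear_combination hM
  have along_L' := translation_log_sub_eq hγ.continuous hγ.map_add_one hθ hL' one_lt.le
    fun t ht => ⟨ht.1, by linarith [ht.2], by simpa using one_lt⟩
  have gluing := (le_or_gt 2 T).elim (hγ.gluing_of_two_le hθ hL hL') (hγ.gluing_of_lt_two hθ hL hL')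
  rw [one_add_one_eq_two, hγ.closed] at along_L'
  exact M_ne_zero (by linear_combination (1 / 2 : ℂ) * (along_L' - gluing - M_shift))

end TranslationLoop

section TranslationArc

section TangentBall

variable {E : Type*} [NormedAddCommGroup E] [NormedSpace ℝ E]

theorem le_dist_map_of_mem_closedBall {G : E → E} (hG : Continuous G) {z : E} {r : ℝ} (hr : r ≠ 0)
    (hle : ∀ v, r ≤ max (dist v z) (dist (G v) z)) {v : E} (hv : v ∈ Metric.closedBall z r) :
    r ≤ dist (G v) z := by
  have ball_subset : Metric.ball z r ⊆ {v | r ≤ dist (G v) z} := fun w hw =>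
    (le_max_iff.1 (hle w)).resolve_left (not_le.2 hw)
  have closedBall_subset := closure_minimal ball_subset (isClosed_le (by fun_prop) (by fun_prop))
  rw [closure_ball z hr] at closedBall_subset
  exact closedBall_subset hv

theorem exists_tangent_ball [ProperSpace E] (G : E ≃ₜ E) (hfix : ∀ v, G v ≠ v) (z : E) :
    ∃ x r, 0 < r ∧ dist x z = r ∧ dist (G x) z = r ∧
      (∀ v ∈ Metric.closedBall z r, r ≤ dist (G v) z) ∧
      ∀ v, G v ∈ Metric.closedBall z r → r ≤ dist v z := by
  have tendsto_max : Tendsto (fun v => max (dist v z) (dist (G v) z)) (cocompact E) atTop :=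
    tendsto_atTop_mono (fun _ => le_max_left _ _) (tendsto_dist_right_cocompact_atTop z)
  obtain ⟨x, hmin⟩ := (show Continuous fun v => max (dist v z) (dist (G v) z) by
    fun_prop).exists_forall_le tendsto_max
  set r := max (dist x z) (dist (G x) z)
  have hr : 0 < r := by
    by_contra! h
    have hx := dist_le_zero.1 ((le_max_left _ _).trans h)
    have hGx := dist_le_zero.1 ((le_max_right _ _).trans h)
    exact hfix x (hGx.trans hx.symm)
  have le_dist_map : ∀ v ∈ Metric.closedBall z r, r ≤ dist (G v) z := fun v =>
    le_dist_map_of_mem_closedBall G.continuous hr.ne' hmin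
  have le_dist : ∀ v, G v ∈ Metric.closedBall z r → r ≤ dist v z := fun v hv => by
    simpa using le_dist_map_of_mem_closedBall G.symm.continuous hr.ne'
      (fun w => by simpa [max_comm] using hmin (G.symm w)) hv
  have hx : dist x z ≤ r := le_max_left _ _
  have hGx : dist (G x) z ≤ r := le_max_right _ _
  exact ⟨x, r, hr, hx.antisymm (le_dist x hGx), hGx.antisymm (le_dist_map x hx), le_dist_map,
    le_dist⟩

end TangentBall

section BentSegment

variable {E : Type*} [NormedAddCommGroup E] [NormedSpace ℝ E]

/-- The polygonal path from `x` to `y` through `z`, which it reaches at time `1 / 2`. -/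
def bentSegment (x z y : E) (t : ℝ) : E :=
  z + max 0 (1 - 2 * t) • (x - z) + max 0 (2 * t - 1) • (y - z)

variable {x y z : E} {r : ℝ}

theorem continuous_bentSegment : Continuous (bentSegment x z y) := by
  unfold bentSegment
  fun_prop

theorem bentSegment_zero : bentSegment x z y 0 = x := by
  simp [bentSegment]

theorem bentSegment_half : bentSegment x z y (1 / 2) = z := by
  simp [bentSegment]

theorem bentSegment_one : bentSegment x z y 1 = y := by
  norm_num [bentSegment]

theorem bentSegment_of_le_half {t : ℝ} (ht : t ≤ 1 / 2) :
    bentSegment x z y t = z + (1 - 2 * t) • (x - z) := by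
  rw [bentSegment, max_eq_right (by linarith), max_eq_left (by linarith), zero_smul, add_zero]

theorem bentSegment_of_half_le {t : ℝ} (ht : 1 / 2 ≤ t) :
    bentSegment x z y t = z + (2 * t - 1) • (y - z) := by
  rw [bentSegment, max_eq_left (by linarith), max_eq_right (by linarith), zero_smul, add_zero]

theorem dist_bentSegment (hx : dist x z = r) (hy : dist y z = r) (t : ℝ) :
    dist (bentSegment x z y t) z = |1 - 2 * t| * r := by
  obtain ht | ht := le_total t (1 / 2)
  · rw [bentSegment_of_le_half ht, dist_eq_norm, add_sub_cancel_left, norm_smul, Real.norm_eq_abs,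
      ← dist_eq_norm, hx]
  · rw [bentSegment_of_half_le ht, dist_eq_norm, add_sub_cancel_left, norm_smul, Real.norm_eq_abs,
      ← dist_eq_norm, hy, abs_sub_comm]

theorem bentSegment_injective (hr : 0 < r) (hx : dist x z = r) (hy : dist y z = r) (hxy : x ≠ y) :
    Function.Injective (bentSegment x z y) := by
  intro s t hst
  wlog hle : s ≤ t generalizing s t
  · exact (this hst.symm (le_of_not_ge hle)).symm
  have abs_eq : |1 - 2 * s| = |1 - 2 * t| := mul_right_cancel₀ hr.ne' <| by
    rw [← dist_bentSegment hx hy, ← dist_bentSegment hx hy, hst]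
  obtain h | h := abs_eq_abs.1 abs_eq
  · linarith
  by_contra hne
  have hlt := hle.lt_of_ne hne
  rw [bentSegment_of_le_half (by linarith), bentSegment_of_half_le (by linarith), h, neg_sub,
    add_right_inj, smul_right_inj (by linarith), sub_left_inj] at hst
  exact hxy hst

theorem bentSegment_mem_closedBall (hx : dist x z = r) (hy : dist y z = r) {t : ℝ}
    (ht : t ∈ Icc 0 1) : bentSegment x z y t ∈ Metric.closedBall z r := by
  rw [Metric.mem_closedBall, dist_bentSegment hx hy]
  exact mul_le_of_le_one_left (hx ▸ dist_nonneg) (abs_le.2 ⟨by linarith [ht.2], by linarith [ht.1]⟩)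

theorem eq_zero_or_eq_one_of_le_dist_bentSegment (hr : 0 < r) (hx : dist x z = r)
    (hy : dist y z = r) {t : ℝ} (ht : t ∈ Icc 0 1) (hle : r ≤ dist (bentSegment x z y t) z) :
    t = 0 ∨ t = 1 := by
  rw [dist_bentSegment hx hy] at hle
  obtain h | h := le_abs.1 (one_le_of_le_mul_right₀ hr hle)
  · exact .inl (by linarith [ht.1])
  · exact .inr (by linarith [ht.2])

end BentSegment

/-- A translation arc of `G`: an arc from `α 0` to `G (α 0)` which meets its image under `G` only
at the endpoints. The endpoint `α 0` may be sent back by `G ^ 2`. -/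
structure IsTranslationArc {X : Type*} [TopologicalSpace X] (G : X → X) (α : ℝ → X) : Prop where
  continuous : Continuous α
  map_zero : G (α 0) = α 1
  injOn : InjOn α (Icc 0 1)
  eq_of_eq_map : ∀ s ∈ Icc 0 1, ∀ t ∈ Icc 0 1, α s = G (α t) → s = 1 ∧ t = 0 ∨ s = 0 ∧ t = 1

theorem exists_isTranslationArc {E : Type*} [NormedAddCommGroup E] [NormedSpace ℝ E]
    [ProperSpace E] (G : E ≃ₜ E) (hfix : ∀ v, G v ≠ v) (z : E) :
    ∃ α : ℝ → E, IsTranslationArc G α ∧ α (1 / 2) = z := by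
  obtain ⟨x, r, hr, hx, hGx, le_dist_map, le_dist⟩ := exists_tangent_ball G hfix z
  refine ⟨bentSegment x z (G x), ⟨continuous_bentSegment, by rw [bentSegment_zero, bentSegment_one],
    (bentSegment_injective hr hx hGx (hfix x).symm).injOn, fun s hs t ht he => ?_⟩,
    bentSegment_half⟩
  have s_end := eq_zero_or_eq_one_of_le_dist_bentSegment hr hx hGx hs <|
    he ▸ le_dist_map _ (bentSegment_mem_closedBall hx hGx ht)
  have t_end := eq_zero_or_eq_one_of_le_dist_bentSegment hr hx hGx ht <|
    le_dist _ (he ▸ bentSegment_mem_closedBall hx hGx hs)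
  have s_ne_t : s ≠ t := fun h => hfix _ (h ▸ he.symm)
  grind

section OrbitCurve

variable {X : Type*} [TopologicalSpace X]

/-- The concatenation of all the images of the arc `α` under the powers of `G`, parametrized so
that `G` acts as `t ↦ t + 1`. -/
def orbitCurve (G : X ≃ₜ X) (α : ℝ → X) (t : ℝ) : X :=
  (G ^ ⌊t⌋) (α (Int.fract t))

variable {G : X ≃ₜ X} {α : ℝ → X}

theorem orbitCurve_add_int (t : ℝ) (n : ℤ) :
    orbitCurve G α (t + n) = (G ^ n) (orbitCurve G α t) := by
  rw [orbitCurve, Int.floor_add_intCast, Int.fract_add_intCast, add_comm, zpow_add]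
  rfl

theorem orbitCurve_add_one (t : ℝ) : orbitCurve G α (t + 1) = G (orbitCurve G α t) := by
  simpa using orbitCurve_add_int (G := G) (α := α) t 1

theorem orbitCurve_of_mem_Icc (h : G (α 0) = α 1) {t : ℝ} (ht : t ∈ Icc 0 1) :
    orbitCurve G α t = α t := by
  obtain ht1 | rfl := ht.2.lt_or_eq
  · rw [orbitCurve, Int.floor_eq_zero_iff.2 ⟨ht.1, ht1⟩, Int.fract_eq_self.2 ⟨ht.1, ht1⟩]
    rfl
  · simpa [orbitCurve] using h

theorem continuous_orbitCurve (hα : Continuous α) (h : G (α 0) = α 1) :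
    Continuous (orbitCurve G α) := by
  have locallyFinite_Icc : LocallyFinite fun n : ℤ => Icc (n : ℝ) (n + 1) := fun x => by
    refine ⟨Ioo (x - 1) (x + 1), Ioo_mem_nhds (by linarith) (by linarith),
      (finite_Icc (⌊x - 2⌋) ⌈x + 2⌉).subset ?_⟩
    rintro n ⟨y, ⟨hny, hyn⟩, hxy, hyx⟩
    exact ⟨Int.floor_le_iff.2 (by linarith), Int.le_ceil_iff.2 (by linarith)⟩
  refine locallyFinite_Icc.continuous ?_ (fun _ => isClosed_Icc) fun n => ?_
  · exact iUnion_eq_univ_iff.2 fun t => ⟨⌊t⌋, Int.floor_le t, (Int.lt_floor_add_one t).le⟩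
  · have hGn : Continuous fun t : ℝ => (G ^ n) (α (t - n)) := by
      have := (G ^ n).continuous
      fun_prop
    refine hGn.continuousOn.congr fun t ht => ?_
    have ht' : t - n ∈ Icc (0 : ℝ) 1 := ⟨by linarith [ht.1], by linarith [ht.2]⟩
    dsimp only
    rw [← orbitCurve_of_mem_Icc h ht', ← orbitCurve_add_int, sub_add_cancel]

namespace IsTranslationArc

theorem eq_of_orbitCurve_eq (hα : IsTranslationArc G α) {s t : ℝ} (hs : s ∈ Icc 0 1)
    (ht : t ∈ Icc 1 2) (h : orbitCurve G α s = orbitCurve G α t) :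
    s = 1 ∧ t = 1 ∨ s = 0 ∧ t = 2 := by
  have ht' : t - 1 ∈ Icc (0 : ℝ) 1 := ⟨by linarith [ht.1], by linarith [ht.2]⟩
  have eq_map := orbitCurve_add_one (G := G) (α := α) (t - 1)
  rw [sub_add_cancel, ← h, orbitCurve_of_mem_Icc hα.map_zero hs,
    orbitCurve_of_mem_Icc hα.map_zero ht'] at eq_map
  have := hα.eq_of_eq_map s hs _ ht' eq_map
  grind

theorem one_lt_sub_of_orbitCurve_eq (hα : IsTranslationArc G α) {s t : ℝ} (hst : s < t)
    (h : orbitCurve G α s = orbitCurve G α t) : 1 < t - s := by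
  by_contra! hle
  have fract_eq : orbitCurve G α (Int.fract s) = orbitCurve G α (t - ⌊s⌋) :=
    (G ^ ⌊s⌋).injective <| by
      rw [← orbitCurve_add_int, ← orbitCurve_add_int, Int.fract_add_floor, sub_add_cancel, h]
  have hs : Int.fract s ∈ Icc (0 : ℝ) 1 := ⟨Int.fract_nonneg s, (Int.fract_lt_one s).le⟩
  have hs' : s = ⌊s⌋ + Int.fract s := (Int.floor_add_fract s).symm
  obtain ht | ht := le_total (t - ⌊s⌋) 1
  · have ht' : t - ⌊s⌋ ∈ Icc (0 : ℝ) 1 := ⟨by linarith [hs.1], ht⟩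
    rw [orbitCurve_of_mem_Icc hα.map_zero hs, orbitCurve_of_mem_Icc hα.map_zero ht'] at fract_eq
    linarith [hα.injOn hs ht' fract_eq]
  · have := hα.eq_of_orbitCurve_eq hs ⟨ht, by linarith [hs.2]⟩ fract_eq
    grind

theorem exists_first_collision [T2Space X] (hα : IsTranslationArc G α) {s₀ t₀ : ℝ}
    (hs₀ : 0 ≤ s₀) (hst₀ : s₀ < t₀) (h₀ : orbitCurve G α s₀ = orbitCurve G α t₀) :
    ∃ S T, 0 ≤ S ∧ S < T ∧ orbitCurve G α S = orbitCurve G α T ∧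
      ∀ s t, 0 ≤ s → s < t → orbitCurve G α s = orbitCurve G α t → T ≤ t := by
  have hγ := continuous_orbitCurve hα.continuous hα.map_zero
  let collisions : Set (ℝ × ℝ) :=
    {p | p ∈ Icc 0 t₀ ×ˢ Icc 0 t₀ ∧ p.1 + 1 ≤ p.2 ∧ orbitCurve G α p.1 = orbitCurve G α p.2}
  have isCompact_collisions : IsCompact collisions := by
    refine (isCompact_Icc.prod isCompact_Icc).inter_right <|
      IsClosed.and (isClosed_le ?_ ?_) (isClosed_eq ?_ ?_) <;> fun_prop
  have mem_collisions : ∀ s t, 0 ≤ s → s < t → t ≤ t₀ → orbitCurve G α s = orbitCurve G α t →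
      (s, t) ∈ collisions := fun s t hs hst ht h => by
    have := hα.one_lt_sub_of_orbitCurve_eq hst h
    exact ⟨⟨⟨hs, by linarith⟩, by linarith, ht⟩, by linarith, h⟩
  obtain ⟨⟨S, T⟩, ⟨⟨hS, hT⟩, hST, hcol⟩, hmin⟩ := isCompact_collisions.exists_isMinOn
    ⟨_, mem_collisions s₀ t₀ hs₀ hst₀ le_rfl h₀⟩ continuous_snd.continuousOn
  refine ⟨S, T, hS.1, by linarith, hcol, fun s t hs hst h => ?_⟩
  obtain ht | ht := le_total t t₀
  · exact hmin (mem_collisions s t hs hst ht h)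
  · exact hT.2.trans ht

end IsTranslationArc

end OrbitCurve

theorem IsTranslationArc.exists_isTranslationLoop {G : ℂ ≃ₜ ℂ} {α : ℝ → ℂ}
    (hα : IsTranslationArc G α) {s₀ t₀ : ℝ} (hs₀ : 0 ≤ s₀) (hst₀ : s₀ < t₀)
    (h₀ : orbitCurve G α s₀ = orbitCurve G α t₀) : ∃ γ T, IsTranslationLoop G γ T := by
  obtain ⟨S, T, hS, hST, hcol, first⟩ := hα.exists_first_collision hs₀ hst₀ h₀
  have continuous_curve := continuous_orbitCurve hα.continuous hα.map_zero
  have one_lt := hα.one_lt_sub_of_orbitCurve_eq hST hcol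
  have back : ∀ s t, orbitCurve G α s = orbitCurve G α t →
      orbitCurve G α (s - 1) = orbitCurve G α (t - 1) := fun s t h => G.injective <| by
    rw [← orbitCurve_add_one, ← orbitCurve_add_one, sub_add_cancel, sub_add_cancel, h]
  have S_lt : S < 1 := by
    by_contra! h
    linarith [first (S - 1) (T - 1) (by linarith) (by linarith) (back S T hcol)]
  have two_le : 2 ≤ T := by
    by_contra! h
    have := hα.eq_of_orbitCurve_eq ⟨hS, S_lt.le⟩ ⟨by linarith, h.le⟩ hcol
    grind
  refine ⟨fun t => orbitCurve G α (t + S), T - S, by fun_prop, fun t => ?_, one_lt, by simp [hcol],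
    fun ⟨s, t⟩ ⟨hs, ht, hst, hlt⟩ he => ?_, fun ⟨s, t⟩ ⟨hs, ht⟩ he => ?_⟩
  · rw [add_right_comm, orbitCurve_add_one]
  · dsimp only at hs ht hst hlt he
    have ht_eq : t + S = T := by linarith [first (s + S) (t + S) (by linarith) (by linarith) he]
    rw [ht_eq, ← hcol] at he
    linarith [first S (s + S) hS (by linarith) he.symm]
  · have hs1 : s + S - 1 ∈ Icc (0 : ℝ) 1 := ⟨by linarith [hs.1], by linarith [hs.2]⟩
    have ht1 : t + S - 1 ∈ Icc (1 : ℝ) 2 := ⟨by linarith [ht.1], by linarith [ht.2]⟩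
    have := hα.eq_of_orbitCurve_eq hs1 ht1 (back _ _ he)
    grind

theorem homeomorph_coe_pow {Y : Type*} [TopologicalSpace Y] (G : Y ≃ₜ Y) (n : ℕ) :
    ⇑(G ^ n) = G^[n] :=
  hom_coe_pow _ rfl (fun _ _ => rfl) G n

theorem HasSymmLogSlope.iterate_ne_self {G : ℂ ≃ₜ ℂ} (hG : HasSymmLogSlope G)
    (hfix : ∀ z, G z ≠ z) (z : ℂ) {n : ℕ} (hn : 1 ≤ n) : G^[n] z ≠ z := fun h => by
  obtain ⟨α, hα, α_half⟩ := exists_isTranslationArc G hfix z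
  have curve_half : orbitCurve G α (1 / 2) = z := by
    rw [orbitCurve_of_mem_Icc hα.map_zero (by norm_num), α_half]
  have curve_half_add : orbitCurve G α (1 / 2 + n) = z := by
    have := orbitCurve_add_int (G := G) (α := α) (1 / 2) n
    rw [Int.cast_natCast, zpow_natCast, curve_half] at this
    rw [this, homeomorph_coe_pow, h]
  obtain ⟨γ, T, hγ⟩ := hα.exists_isTranslationLoop (by norm_num)
    (lt_add_of_pos_right _ (by positivity)) (curve_half.trans curve_half_add.symm)
  exact hG.not_isTranslationLoop G.continuous hfix hγ

end TranslationArc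

section Push

section Tent

variable {X : Type*} [PseudoMetricSpace X] {c v : X} {ρ : ℝ}

/-- The tent function of height `1` over the ball of center `c` and radius `ρ`. -/
def tent (c : X) (ρ : ℝ) (v : X) : ℝ :=
  max 0 (1 - dist v c / ρ)

theorem tent_self : tent c ρ c = 1 := by
  simp [tent]

theorem tent_of_le_dist (hρ : 0 < ρ) (h : ρ ≤ dist v c) : tent c ρ v = 0 :=
  max_eq_left (sub_nonpos.2 ((one_le_div hρ).2 h))

theorem tent_of_dist_le (hρ : 0 < ρ) (h : dist v c ≤ ρ) : tent c ρ v = 1 - dist v c / ρ :=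
  max_eq_right (sub_nonneg.2 ((div_le_one hρ).2 h))

theorem dist_tent_le (hρ : 0 ≤ ρ) (x y : X) : dist (tent c ρ x) (tent c ρ y) ≤ dist x y / ρ :=
  calc dist (tent c ρ x) (tent c ρ y)
      ≤ |(1 - dist x c / ρ) - (1 - dist y c / ρ)| := by
        simpa only [tent, Real.dist_eq, max_comm (0 : ℝ)] using abs_max_sub_max_le_abs _ _ 0
    _ = |dist x c - dist y c| / ρ := by
        rw [sub_sub_sub_cancel_left, ← sub_div, abs_div, abs_of_nonneg hρ, abs_sub_comm]
    _ ≤ dist x y / ρ := by gcongr; exact abs_dist_sub_le x y c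

end Tent

section TentSMul

variable {E : Type*} [NormedAddCommGroup E] [NormedSpace ℝ E] {c w : E} {ρ : ℝ}

theorem lipschitzWith_tent_smul (hρ : 0 ≤ ρ) :
    LipschitzWith (Real.toNNReal (‖w‖ / ρ)) fun v => tent c ρ v • w :=
  LipschitzWith.of_dist_le' fun x y =>
    calc dist (tent c ρ x • w) (tent c ρ y • w)
        = dist (tent c ρ x) (tent c ρ y) * ‖w‖ := by
          rw [dist_eq_norm, ← sub_smul, norm_smul, Real.dist_eq, Real.norm_eq_abs]
      _ ≤ dist x y / ρ * ‖w‖ := by gcongr; exact dist_tent_le hρ x y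
      _ = ‖w‖ / ρ * dist x y := by ring

theorem add_tent_smul_mem_ball (hw : ‖w‖ < ρ) {v : E} (hv : v ∈ Metric.ball c ρ) :
    v + tent c ρ v • w ∈ Metric.ball c ρ := by
  have hρ : 0 < ρ := (norm_nonneg w).trans_lt hw
  have htent := tent_of_dist_le hρ (Metric.mem_ball.1 hv).le
  have tent_pos : 0 < tent c ρ v := by
    rw [htent, sub_pos, div_lt_one hρ]
    exact hv
  rw [mem_ball_iff_norm]
  calc ‖v + tent c ρ v • w - c‖ = ‖(v - c) + tent c ρ v • w‖ := by rw [add_sub_right_comm]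
    _ ≤ dist v c + tent c ρ v * ‖w‖ := by
        rw [dist_eq_norm, ← Real.norm_of_nonneg tent_pos.le, ← norm_smul,
          Real.norm_of_nonneg tent_pos.le]
        exact norm_add_le _ _
    _ < dist v c + tent c ρ v * ρ := by gcongr
    _ = ρ := by rw [htent]; field_simp; ring

theorem exists_homeomorph_id_add [CompleteSpace E] {u : E → E} {K : NNReal}
    (hu : LipschitzWith K u) (hK : K < 1) : ∃ φ : E ≃ₜ E, ∀ v, φ v = v + u v := by
  have approx : ApproximatesLinearOn (fun v => v + u v)
      (ContinuousLinearEquiv.refl ℝ E : E →L[ℝ] E) univ K := fun x _ y _ => by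
    have : x + u x - (y + u y) - (x - y) = u x - u y := by abel
    simpa [this] using hu.norm_sub_le x y
  refine ⟨approx.toHomeomorph _ ?_, fun _ => rfl⟩
  obtain hE | hE := subsingleton_or_nontrivial E
  · exact .inl hE
  · exact .inr (by simpa using hK)

end TentSMul

theorem exists_push {c w : ℂ} {ρ : ℝ} (hw : ‖w‖ < ρ) :
    ∃ φ : ℂ ≃ₜ ℂ, HasSymmLogSlope φ ∧ φ c = c + w ∧ (∀ v ∉ Metric.ball c ρ, φ v = v) ∧
      ∀ v ∈ Metric.ball c ρ, φ v ∈ Metric.ball c ρ := by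
  have hρ : 0 < ρ := (norm_nonneg w).trans_lt hw
  have hlip := lipschitzWith_tent_smul (c := c) (w := w) hρ.le
  have hK : Real.toNNReal (‖w‖ / ρ) < 1 := by simpa [div_lt_one hρ] using hw
  obtain ⟨φ, hφ⟩ := exists_homeomorph_id_add hlip hK
  refine ⟨φ, ?_, by rw [hφ, tent_self, one_smul], fun v hv => ?_, fun v hv => ?_⟩
  · simpa only [funext hφ] using HasSymmLogSlope.id_add_of_lipschitzWith hlip hK
  · rw [hφ, tent_of_le_dist hρ (not_lt.1 hv), zero_smul, add_zero]
  · exact hφ v ▸ add_tent_smul_mem_ball hw hv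

end Push

section Nonwandering

variable {X Y : Type*} [TopologicalSpace X] [TopologicalSpace Y]

/-- `x` is a nonwandering point of `g`: every neighborhood of `x` meets one of its forward
images. -/
def NonwanderingPt (g : X → X) (x : X) : Prop :=
  ∀ U ∈ 𝓝 x, ∃ n ≥ 1, ∃ z ∈ U, g^[n] z ∈ U

theorem NonwanderingPt.map {f : X → X} {g : Y → Y} {e : X → Y} {x : X} (hx : NonwanderingPt f x)
    (he : Continuous e) (h : Function.Semiconj e f g) : NonwanderingPt g (e x) := by
  intro U hU
  obtain ⟨n, hn, z, hz, hzn⟩ := hx _ (he.continuousAt hU)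
  exact ⟨n, hn, e z, hz, (h.iterate_right n).eq z ▸ hzn⟩

end Nonwandering

namespace HasSymmLogSlope

variable {G : ℂ ≃ₜ ℂ}

-- Composing with a push of `c` to `z` supported in the free ball turns the first return to `c`
-- into a periodic orbit without creating a fixed point.
theorem iterate_ne_of_free_ball (hG : HasSymmLogSlope G) (hfix : ∀ z, G z ≠ z) {c : ℂ} {ρ : ℝ}
    (hfree : ∀ v ∈ Metric.ball c ρ, G v ∉ Metric.ball c ρ) {n : ℕ} (hn : 1 ≤ n) {z : ℂ}
    (hz : z ∈ Metric.ball c ρ) : G^[n] z ≠ c := by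
  induction n using Nat.strong_induction_on generalizing z with | _ n ih => ?_
  intro hzn
  have orbit_notMem_ball : ∀ i, 1 ≤ i → i < n → G^[i] z ∉ Metric.ball c ρ := fun i hi hin hmem => by
    refine ih (n - i) (by lia) (by lia) hmem ?_
    rw [← Function.iterate_add_apply, Nat.sub_add_cancel hin.le, hzn]
  obtain ⟨φ, hφ, φ_c, φ_out, φ_in⟩ := exists_push (c := c) (mem_ball_iff_norm.1 hz)
  have orbit_eq : ∀ i < n, (G.trans φ)^[i] z = G^[i] z := fun i => by
    induction i with
    | zero => exact fun _ => rfl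
    | succ i ihi =>
      intro hi
      rw [Function.iterate_succ_apply', ihi (by lia), Homeomorph.trans_apply,
        ← Function.iterate_succ_apply' G, φ_out _ (orbit_notMem_ball _ (by lia) hi)]
  have push_fix : ∀ v, G.trans φ v ≠ v := fun v hv => by
    rw [Homeomorph.trans_apply] at hv
    by_cases hmem : G v ∈ Metric.ball c ρ
    · exact hfree v (hv ▸ φ_in _ hmem) hmem
    · exact hfix v (φ_out _ hmem ▸ hv)
  refine (hφ.comp hG G.continuous G.injective).iterate_ne_self (G := G.trans φ) push_fix z hn ?_
  obtain ⟨m, rfl⟩ := Nat.exists_eq_add_of_le' hn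
  rw [Function.iterate_succ_apply', orbit_eq m (by lia), Homeomorph.trans_apply,
    ← Function.iterate_succ_apply' G, hzn, φ_c, add_sub_cancel]

theorem exists_fixedPoint_of_nonwanderingPt (hG : HasSymmLogSlope G) {x : ℂ}
    (hx : NonwanderingPt G x) : ∃ z, G z = z := by
  by_contra! hfix
  have isOpen_ne_map : IsOpen {p : ℂ × ℂ | G p.1 ≠ p.2} :=
    isOpen_ne_fun (by fun_prop) (by fun_prop)
  obtain ⟨η, hη, hball⟩ := Metric.isOpen_iff.1 isOpen_ne_map (x, x) (hfix x)
  rw [← ball_prod_same] at hball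
  obtain ⟨n, hn, z, hz, hzn⟩ := hx _ (Metric.ball_mem_nhds x (by positivity : 0 < η / 4))
  have ball_subset : Metric.ball (G^[n] z) (η / 2) ⊆ Metric.ball x η :=
    Metric.ball_subset_ball' (by linarith [Metric.mem_ball.1 hzn])
  refine hG.iterate_ne_of_free_ball hfix (ρ := η / 2) (c := G^[n] z) (fun v hv hGv =>
    hball (mk_mem_prod (ball_subset hv) (ball_subset hGv)) rfl) hn ?_ rfl
  rw [Metric.mem_ball] at *
  linarith [dist_triangle_right z (G^[n] z) x]

end HasSymmLogSlope

section Covering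

theorem pA_eq_iff {u v : ℝ × ℝ} : pA u = pA v ↔ ∃ k : ℤ, v = u + ((k : ℝ), 0) := by
  have coe_eq_iff : (u.1 : T1) = v.1 ↔ ∃ k : ℤ, v.1 = u.1 + k := by
    rw [eq_comm, QuotientAddGroup.eq_iff_sub_mem, AddSubgroup.mem_zmultiples_iff]
    simp only [zsmul_one, eq_comm, sub_eq_iff_eq_add']
  simp only [pA, coe_eq_iff, Prod.ext_iff, Prod.fst_add, Prod.snd_add, add_zero,
    exists_and_right, eq_comm (a := u.2)]

theorem pA_add_intCast (u : ℝ × ℝ) (k : ℤ) : pA (u + ((k : ℝ), 0)) = pA u :=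
  (pA_eq_iff.2 ⟨k, rfl⟩).symm

theorem pA_surjective : Function.Surjective pA :=
  QuotientAddGroup.mk_surjective.prodMap Function.surjective_id

theorem isCoveringMap_pA : IsCoveringMap pA := by
  have isQuotientMap_pA : IsQuotientMap pA :=
    (QuotientAddGroup.isOpenMap_coe.prodMap IsOpenMap.id).isQuotientMap
      (QuotientAddGroup.continuous_mk.prodMap continuous_id) pA_surjective
  have discrete : DiscreteTopology (AddSubgroup.zmultiples ((1 : ℝ), (0 : ℝ))) :=
    NormedSpace.discreteTopology_zmultiples _
  refine (isQuotientMap_pA.isAddQuotientCoveringMap_of_addSubgroup _ discrete.isDiscrete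
    fun {u v} => ?_).isCoveringMap
  simp only [pA_eq_iff, AddSubgroup.mem_zmultiples_iff, ← sub_eq_add_neg,
    Prod.smul_mk, zsmul_one, smul_zero, eq_comm, sub_eq_iff_eq_add']

theorem exists_int_of_pA_comp_eq {A : Type*} [TopologicalSpace A] [ConnectedSpace A]
    {g₁ g₂ : A → ℝ × ℝ} (hg₁ : Continuous g₁) (hg₂ : Continuous g₂)
    (h : ∀ a, pA (g₁ a) = pA (g₂ a)) : ∃ k : ℤ, ∀ a, g₂ a = g₁ a + ((k : ℝ), 0) := by
  obtain ⟨a₀⟩ := ‹ConnectedSpace A›.toNonempty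
  obtain ⟨k, hk⟩ := pA_eq_iff.1 (h a₀)
  refine ⟨k, congrFun (isCoveringMap_pA.eq_of_comp_eq hg₂ (hg₁.add_const _) ?_ a₀ hk)⟩
  exact funext fun a => (h a).symm.trans (pA_add_intCast _ _).symm

end Covering

section Lift

variable {f : Ann ≃ₜ Ann} {fc : (ℝ × ℝ) ≃ₜ (ℝ × ℝ)}

theorem IsotopicToId.exists_lift (hf : IsotopicToId f) :
    ∃ h : unitInterval × (ℝ × ℝ) → ℝ × ℝ, Continuous h ∧ (∀ z, h (0, z) = z) ∧
      (∀ z, pA (h (1, z)) = f (pA z)) ∧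
      (∀ t z (k : ℤ), h (t, z + ((k : ℝ), 0)) = h (t, z) + ((k : ℝ), 0)) ∧
      ∀ t, Function.Injective fun z => h (t, z) := by
  obtain ⟨H, hH, H_zero, H_one, H_homeo⟩ := hf
  have := isCoveringMap_pA.continuous
  let Hπ : C(unitInterval × (ℝ × ℝ), Ann) := ⟨fun p => H (p.1, pA p.2),
    hH.comp_continuous (by fun_prop) fun p => ⟨p.1.2, trivial⟩⟩
  let h := isCoveringMap_pA.liftHomotopy Hπ (.id _) fun z => H_zero (pA z)
  have pA_h : ∀ t z, pA (h (t, z)) = H (t, pA z) := fun t z =>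
    congrFun (isCoveringMap_pA.liftHomotopy_lifts Hπ _ _) (t, z)
  have h_zero : ∀ z, h (0, z) = z := isCoveringMap_pA.liftHomotopy_zero Hπ _ _
  have h_deck : ∀ t z (k : ℤ), h (t, z + ((k : ℝ), 0)) = h (t, z) + ((k : ℝ), 0) := fun t z k =>
    congrFun (isCoveringMap_pA.eq_of_comp_eq
      (g₁ := fun t => h (t, z + ((k : ℝ), 0))) (g₂ := fun t => h (t, z) + ((k : ℝ), 0))
      (by fun_prop) (by fun_prop)
      (funext fun t => by simp only [Function.comp_apply, pA_h, pA_add_intCast]) 0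
      (by rw [h_zero, h_zero])) t
  refine ⟨h, h.continuous, h_zero, fun z => (pA_h 1 z).trans (H_one _), h_deck, ?_⟩
  intro t u v (huv : h (t, u) = h (t, v))
  obtain ⟨φ, hφ⟩ := H_homeo t t.2
  have pA_eq : pA u = pA v := φ.injective (by rw [← hφ, ← hφ, ← pA_h, ← pA_h, huv])
  obtain ⟨k, rfl⟩ := pA_eq_iff.1 pA_eq
  rw [h_deck, left_eq_add] at huv
  rw [huv, add_zero]

theorem IsLift.exists_isotopy (hlift : IsLift f fc) (hf : IsotopicToId f) :
    ∃ h : unitInterval × (ℝ × ℝ) → ℝ × ℝ, Continuous h ∧ (∀ z, h (0, z) = z) ∧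
      (∀ t z (k : ℤ), h (t, z + ((k : ℝ), 0)) = h (t, z) + ((k : ℝ), 0)) ∧
      (∀ t, Function.Injective fun z => h (t, z)) ∧
      ∃ k : ℤ, ∀ z, fc z = h (1, z) + ((k : ℝ), 0) := by
  obtain ⟨h, h_cont, h_zero, pA_h_one, h_deck, h_inj⟩ := hf.exists_lift
  exact ⟨h, h_cont, h_zero, h_deck, h_inj, exists_int_of_pA_comp_eq (by fun_prop) fc.continuous
    fun z => (pA_h_one z).trans (hlift z).symm⟩

theorem IsLift.commute_deck (hlift : IsLift f fc) (hf : IsotopicToId f) (k : ℤ) :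
    Function.Commute fc (· + ((k : ℝ), 0)) := by
  obtain ⟨h, -, -, h_deck, -, m, hm⟩ := hlift.exists_isotopy hf
  intro z
  simp only [hm, h_deck, add_right_comm]

/-- The plane homeomorphism `g` read in the complex coordinate `x + y i`. -/
def complexModel (g : (ℝ × ℝ) ≃ₜ (ℝ × ℝ)) : ℂ ≃ₜ ℂ :=
  Complex.equivRealProdCLM.toHomeomorph.trans
    (g.trans Complex.equivRealProdCLM.symm.toHomeomorph)

theorem semiconj_complexModel (g : (ℝ × ℝ) ≃ₜ (ℝ × ℝ)) :
    Function.Semiconj Complex.equivRealProdCLM.symm g (complexModel g) := fun z => by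
  simp [complexModel]

theorem IsLift.hasSymmLogSlope (hlift : IsLift f fc) (hf : IsotopicToId f) :
    HasSymmLogSlope (complexModel fc) := by
  obtain ⟨h, h_cont, h_zero, -, h_inj, k, hk⟩ := hlift.exists_isotopy hf
  let e := Complex.equivRealProdCLM
  have isotopy : HasSymmLogSlope fun z => e.symm (h (1, e z)) :=
    .of_isotopy (h := fun p => e.symm (h (p.1, e p.2))) (by fun_prop) (fun z => by simp [h_zero])
      fun t => e.symm.injective.comp ((h_inj t).comp e.injective)
  convert isotopy.add_const (e.symm ((k : ℝ), 0)) using 2 with z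
  rw [← map_add, ← hk]
  rfl

theorem IsLift.hasSymmLogSlope_pow_add_const (hlift : IsLift f fc) (hf : IsotopicToId f) (n : ℕ)
    (v : ℝ × ℝ) : HasSymmLogSlope (complexModel ((fc ^ n).trans (.addRight v))) := by
  let e := Complex.equivRealProdCLM
  have iterate_slope := (hlift.hasSymmLogSlope hf).iterate (complexModel fc).continuous
    (complexModel fc).injective n
  convert iterate_slope.add_const (e.symm v) using 2 with z
  obtain ⟨u, rfl⟩ := e.symm.surjective z
  rw [← ((semiconj_complexModel fc).iterate_right n).eq u, ← map_add, ← homeomorph_coe_pow]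
  exact ((semiconj_complexModel _).eq u).symm

end Lift

section Visits

theorem exists_mul_measureReal_le_card_visits {α : Type*} [MeasurableSpace α] {μ : Measure α}
    [IsProbabilityMeasure μ] {F : α → α} (hF : MeasurePreserving F μ μ) {U : Set α}
    (hU : MeasurableSet U) (N : ℕ) :
    ∃ (a : α) (V : Finset ℕ), (∀ n ∈ V, n < N ∧ F^[n] a ∈ U) ∧ N * μ.real U ≤ V.card := by
  classical
  have hpre : ∀ n, MeasurableSet (F^[n] ⁻¹' U) := fun n => (hF.iterate n).measurable hU
  let visits : α → ENNReal := fun a => ∑ n ∈ Finset.range N, (F^[n] ⁻¹' U).indicator 1 a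
  have lintegral_visits : ∫⁻ a, visits a ∂μ = N * μ U := by
    rw [lintegral_finsetSum _ fun n _ => measurable_one.indicator (hpre n)]
    simp [lintegral_indicator_one (hpre _),
      (hF.iterate _).measure_preimage hU.nullMeasurableSet]
  obtain ⟨a, ha⟩ := exists_lintegral_le (μ := μ) (f := visits)
    (lintegral_visits ▸ ENNReal.mul_ne_top (by simp) (measure_ne_top _ _))
  have visits_eq : visits a = ((Finset.range N).filter fun n => F^[n] a ∈ U).card := by
    simp [visits, indicator_apply]
  rw [lintegral_visits, visits_eq] at ha
  exact ⟨a, (Finset.range N).filter fun n => F^[n] a ∈ U, by simp, by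
    simpa [Measure.real] using ENNReal.toReal_mono (by simp) ha⟩

theorem card_le_of_injOn_of_abs_sub_le {V : Finset ℕ} {m : ℕ → ℤ} (hm : InjOn m V) {N₀ : ℕ}
    {B : ℝ} (hB : 0 ≤ B)
    (hle : ∀ n ∈ V, ∀ n' ∈ V, n + N₀ ≤ n' → |(m n' : ℝ) - m n| ≤ B) :
    (V.card : ℝ) ≤ N₀ + (2 * B + 1) := by
  obtain rfl | hne := V.eq_empty_or_nonempty
  · simp only [Finset.card_empty, Nat.cast_zero]
    positivity
  obtain ⟨n₀, hn₀, n₀_le⟩ := V.exists_min_image _root_.id hne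
  let late := V.filter fun n => n₀ + N₀ ≤ n
  have V_subset : V ⊆ Finset.Ico n₀ (n₀ + N₀) ∪ late := fun n hn => by
    have := n₀_le n hn
    grind
  have card_V_le : V.card ≤ N₀ + late.card := by
    simpa using (Finset.card_le_card V_subset).trans (Finset.card_union_le _ _)
  have card_late_le : late.card ≤ (Finset.Icc (m n₀ - ⌊B⌋) (m n₀ + ⌊B⌋)).card := by
    refine Finset.card_le_card_of_injOn m (fun n hn => ?_)
      (hm.mono (Finset.coe_subset.2 (Finset.filter_subset _ _)))
    obtain ⟨hnV, hn⟩ := Finset.mem_filter.1 hn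
    have : |m n - m n₀| ≤ ⌊B⌋ := Int.le_floor.2 (by exact_mod_cast hle n₀ hn₀ n hnV hn)
    rw [abs_le] at this
    exact Finset.mem_coe.2 (Finset.mem_Icc.2 ⟨by linarith, by linarith⟩)
  have card_Icc_le : ((Finset.Icc (m n₀ - ⌊B⌋) (m n₀ + ⌊B⌋)).card : ℝ) ≤ 2 * B + 1 := by
    have card_eq : ((Finset.Icc (m n₀ - ⌊B⌋) (m n₀ + ⌊B⌋)).card : ℤ) = 2 * ⌊B⌋ + 1 := by
      rw [Int.card_Icc, Int.toNat_of_nonneg (by linarith [Int.floor_nonneg.2 hB])]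
      ring
    calc ((Finset.Icc (m n₀ - ⌊B⌋) (m n₀ + ⌊B⌋)).card : ℝ) = 2 * ⌊B⌋ + 1 := by
          exact_mod_cast card_eq
      _ ≤ 2 * B + 1 := by linarith [Int.floor_le B]
  calc (V.card : ℝ) ≤ N₀ + late.card := by exact_mod_cast card_V_le
    _ ≤ N₀ + (2 * B + 1) := by gcongr; exact (Nat.cast_le.2 card_late_le).trans card_Icc_le

end Visits

section Rotation

/-- The orbit segments of `g` that start and end over a given compact subset of the annulus
advance horizontally at speed `x`, up to an error which is uniformly small for long segments. -/
def HasUniformRotation (g : ℝ × ℝ → ℝ × ℝ) (x : ℝ) : Prop :=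
  ∀ K : Set Ann, IsCompact K → ∀ ε > 0, ∃ N : ℕ, ∀ n ≥ N, ∀ z,
    pA z ∈ K → pA (g^[n] z) ∈ K → |(g^[n] z).1 - z.1 - n * x| ≤ ε * n

namespace HasUniformRotation

variable {g : ℝ × ℝ → ℝ × ℝ} {x : ℝ}

theorem of_rot_subset {fc : (ℝ × ℝ) ≃ₜ (ℝ × ℝ)} (h : rot fc ⊆ {(x : EReal)}) :
    HasUniformRotation fc x := by
  intro K hK ε hε
  by_contra! hcon
  choose n hn z hz hzn hlt using hcon
  let speed : ℕ → ℝ := fun k => ((fc^[n k] (z k)).1 - (z k).1) / n k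
  obtain ⟨ρ, φ, hφ, hρ⟩ := CompactSpace.tendsto_subseq fun k => (speed k : EReal)
  have hmem : ρ ∈ rot fc := subset_closure <| mem_iUnion₂.2 ⟨K, hK, z ∘ φ, n ∘ φ,
    (tendsto_atTop_mono hn tendsto_id).comp hφ.tendsto_atTop, fun k => ⟨hz _, hzn _⟩, hρ⟩
  obtain rfl : ρ = x := h hmem
  obtain ⟨k, hk⟩ := (Metric.tendsto_nhds.1 (EReal.tendsto_coe.1 hρ) ε hε).exists
  have hpos : (0 : ℝ) < n (φ k) := by
    refine Nat.cast_pos.2 (Nat.pos_of_ne_zero fun h0 => ?_)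
    simpa [h0] using hlt (φ k)
  refine (hlt (φ k)).not_ge ?_
  calc |(fc^[n (φ k)] (z (φ k))).1 - (z (φ k)).1 - n (φ k) * x|
      = |speed (φ k) - x| * n (φ k) := by
        rw [← abs_of_pos hpos, ← abs_mul, abs_of_pos hpos, sub_mul,
          div_mul_cancel₀ _ hpos.ne', mul_comm x]
    _ ≤ ε * n (φ k) := by gcongr; exact hk.le

theorem iterate (hg : HasUniformRotation g x) {q : ℕ} (hq : 1 ≤ q) :
    HasUniformRotation g^[q] (q * x) := by
  intro K hK ε hε
  have : (0 : ℝ) < q := Nat.cast_pos.2 hq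
  obtain ⟨N, hN⟩ := hg K hK (ε / q) (by positivity)
  refine ⟨N, fun n hn z hz hzn => ?_⟩
  rw [← Function.iterate_mul] at hzn ⊢
  have := hN (q * n) (hn.trans (Nat.le_mul_of_pos_left n hq)) z hz hzn
  have bound_eq : ε / q * (q * n) = ε * n := by field_simp
  rwa [Nat.cast_mul, bound_eq, mul_comm (q : ℝ), mul_assoc] at this

theorem add_intCast (hg : HasUniformRotation g x) {k : ℤ}
    (hk : Function.Commute g (· + ((k : ℝ), 0))) :
    HasUniformRotation (fun z => g z + ((k : ℝ), 0)) (x + k) := by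
  have iterate_eq : ∀ n z, (fun z => g z + ((k : ℝ), 0))^[n] z =
      g^[n] z + (((n * k : ℤ) : ℝ), 0) := fun n z => by
    have := congrFun (hk.symm.comp_iterate n) z
    simpa [Function.comp_def] using this
  intro K hK ε hε
  obtain ⟨N, hN⟩ := hg K hK ε hε
  refine ⟨N, fun n hn z hz hzn => ?_⟩
  rw [iterate_eq] at hzn ⊢
  rw [pA_add_intCast] at hzn
  convert hN n hn z hz hzn using 2
  simp only [Int.cast_mul, Int.cast_natCast, Prod.fst_add]
  ring

end HasUniformRotation

end Rotation

section Recurrence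

variable {g : ℝ × ℝ → ℝ × ℝ}

theorem card_visits_le_of_wandering (hdeck : ∀ k : ℤ, Function.Commute g (· + ((k : ℝ), 0)))
    {D : Set (ℝ × ℝ)} (hD : ∀ n ≥ 1, ∀ z ∈ D, g^[n] z ∉ D) {C : ℝ} (hC : 0 ≤ C)
    (hdiam : ∀ u ∈ D, ∀ v ∈ D, |u.1 - v.1| ≤ C) {ε : ℝ} (hε : 0 ≤ ε) {N₀ : ℕ}
    (hrot : ∀ n ≥ N₀, ∀ z, pA z ∈ pA '' D → pA (g^[n] z) ∈ pA '' D →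
      |(g^[n] z).1 - z.1| ≤ ε * n)
    {N : ℕ} {b : ℝ × ℝ} {V : Finset ℕ} (hV : ∀ n ∈ V, n < N ∧ pA (g^[n] b) ∈ pA '' D) :
    (V.card : ℝ) ≤ N₀ + (2 * (ε * N + C) + 1) := by
  have hlift : ∀ n ∈ V, ∃ w ∈ D, ∃ m : ℤ, g^[n] b = w + ((m : ℝ), 0) := fun n hn => by
    obtain ⟨w, hw, hwn⟩ := (hV n hn).2
    exact ⟨w, hw, pA_eq_iff.1 hwn⟩
  choose! w hw m hm using hlift
  have not_return : ∀ n ∈ V, ∀ n' ∈ V, n < n' → m n ≠ m n' := fun n hn n' hn' hlt heq => by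
    obtain ⟨j, rfl⟩ := Nat.exists_eq_add_of_le' hlt.le
    refine hD j (by lia) (w n) (hw n hn) ?_
    have := hm _ hn'
    rw [Function.iterate_add_apply, hm n hn, ((hdeck (m n)).iterate_left j).eq, heq] at this
    exact add_right_cancel this ▸ hw _ hn'
  refine card_le_of_injOn_of_abs_sub_le (m := m) ?_ (by positivity) fun n hn n' hn' hle => ?_
  · intro n hn n' hn' heq
    by_contra hne
    obtain hlt | hlt := lt_or_gt_of_ne hne
    exacts [not_return n hn n' hn' hlt heq, not_return n' hn' n hn hlt heq.symm]
  · obtain ⟨j, rfl⟩ := Nat.exists_eq_add_of_le' ((Nat.le_add_right _ _).trans hle)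
    have hj := hrot j (by lia) (g^[n] b) (hV n hn).2
      (by rw [← Function.iterate_add_apply]; exact (hV _ hn').2)
    rw [← Function.iterate_add_apply, hm _ hn', hm n hn] at hj
    have hjN : ε * j ≤ ε * N := by
      gcongr
      exact (Nat.le_add_right j n).trans (hV _ hn').1.le
    have := hdiam _ (hw _ hn') _ (hw n hn)
    simp only [Prod.fst_add, abs_le] at this hj ⊢
    constructor <;> linarith

-- A wandering ball meets the orbit of a lift at most once over each of its deck translates, so
-- sublinear displacement contradicts the linear number of visits forced by invariance of `μ`.
theorem nonwanderingPt_of_pA_mem_support {μ : Measure Ann} [IsProbabilityMeasure μ] {F : Ann → Ann}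
    (hF : MeasurePreserving F μ μ) (hg : Function.Semiconj pA g F)
    (hdeck : ∀ k : ℤ, Function.Commute g (· + ((k : ℝ), 0))) (hrot : HasUniformRotation g 0)
    {c : ℝ × ℝ} (hc : pA c ∈ μ.support) : NonwanderingPt g c := by
  intro U hU
  obtain ⟨ρ, hρ, hball⟩ := Metric.mem_nhds_iff.1 hU
  by_contra! hwander
  let D := Metric.ball c ρ
  have isOpen_image : IsOpen (pA '' D) := isCoveringMap_pA.isOpenMap _ Metric.isOpen_ball
  have hp : 0 < μ.real (pA '' D) := ENNReal.toReal_pos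
    (((μ.mem_support_iff_forall _).1 hc) _
      (isOpen_image.mem_nhds ⟨c, Metric.mem_ball_self hρ, rfl⟩)).ne' (measure_ne_top _ _)
  set p := μ.real (pA '' D)
  have image_subset : pA '' D ⊆ pA '' Metric.closedBall c ρ :=
    image_mono Metric.ball_subset_closedBall
  obtain ⟨N₀, hN₀⟩ := hrot _ ((isCompact_closedBall c ρ).image isCoveringMap_pA.continuous)
    (p / 4) (by positivity)
  obtain ⟨N, hN⟩ := exists_nat_gt ((N₀ + 4 * ρ + 1) / (p / 2))
  rw [div_lt_iff₀ (by positivity)] at hN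
  obtain ⟨a, V, hV, le_card⟩ :=
    exists_mul_measureReal_le_card_visits hF isOpen_image.measurableSet N
  obtain ⟨b, rfl⟩ := pA_surjective a
  have card_le := card_visits_le_of_wandering hdeck (D := D) (C := 2 * ρ) (ε := p / 4) (N₀ := N₀)
    (fun n hn z hz hzn => hwander n hn z (hball hz) (hball hzn)) (by positivity)
    (fun u hu v hv => ?_) (by positivity)
    (fun n hn z hz hzn => by
      simpa using hN₀ n hn z (image_subset hz) (image_subset hzn))
    (N := N) (b := b) (V := V) (fun n hn => ⟨(hV n hn).1, ?_⟩)
  · linarith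
  · have := dist_triangle_right u v c
    have := (le_max_left _ _).trans_eq (Prod.dist_eq (x := u) (y := v)).symm
    rw [Real.dist_eq] at this
    linarith [Metric.mem_ball.1 hu, Metric.mem_ball.1 hv]
  · exact (hg.iterate_right n).eq b ▸ (hV n hn).2

end Recurrence

theorem exists_fixedPoint_of_hasUniformRotation {μ : Measure Ann} [IsProbabilityMeasure μ]
    {F : Ann → Ann} (hF : MeasurePreserving F μ μ) {g : (ℝ × ℝ) ≃ₜ (ℝ × ℝ)}
    (hg : Function.Semiconj pA g F) (hdeck : ∀ k : ℤ, Function.Commute g (· + ((k : ℝ), 0)))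
    (hrot : HasUniformRotation g 0) (hslope : HasSymmLogSlope (complexModel g)) :
    ∃ z, g z = z := by
  obtain ⟨a, ha⟩ := Measure.nonempty_support (IsProbabilityMeasure.ne_zero μ)
  obtain ⟨c, rfl⟩ := pA_surjective a
  have hc : NonwanderingPt g c := nonwanderingPt_of_pA_mem_support hF hg hdeck hrot ha
  obtain ⟨w, hw⟩ := hslope.exists_fixedPoint_of_nonwanderingPt
    (hc.map Complex.equivRealProdCLM.symm.continuous (semiconj_complexModel g))
  obtain ⟨z, rfl⟩ := Complex.equivRealProdCLM.symm.surjective w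
  exact ⟨z, Complex.equivRealProdCLM.symm.injective (((semiconj_complexModel g).eq z).trans hw)⟩

theorem rotation_set_singleton_realized_general (f : Ann ≃ₜ Ann) (μ : Measure Ann)
    [IsProbabilityMeasure μ] (hiso : IsotopicToId f) (hμ : MeasurePreserving f μ μ)
    (fc : (ℝ × ℝ) ≃ₜ (ℝ × ℝ)) (hlift : IsLift f fc) (r s : ℤ) (hs : 1 ≤ s)
    (hrot : rot fc = {(((r : ℝ) / (s : ℝ) : ℝ) : EReal)}) :
    ∃ z : ℝ × ℝ, (⇑fc)^[s.toNat] z = z + ((r : ℝ), 0) := by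
  obtain ⟨q, rfl⟩ := Int.eq_ofNat_of_zero_le (zero_le_one.trans hs)
  have hq : 1 ≤ q := by exact_mod_cast hs
  have deck := fun k => (hlift.commute_deck hiso k).iterate_left q
  let g : (ℝ × ℝ) ≃ₜ (ℝ × ℝ) := (fc ^ q).trans (.addRight (((-r : ℤ) : ℝ), 0))
  have g_eq : ⇑g = fun z => fc^[q] z + (((-r : ℤ) : ℝ), 0) := funext fun z => by
    simp only [g, Homeomorph.trans_apply, homeomorph_coe_pow, Homeomorph.coe_addRight]
  have g_semiconj : Function.Semiconj pA g f^[q] := fun z => by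
    simp only [g_eq, pA_add_intCast, (Function.Semiconj.iterate_right hlift q).eq z]
  have g_deck : ∀ k : ℤ, Function.Commute g (· + ((k : ℝ), 0)) := fun k z => by
    simp only [g_eq, (deck k).eq z, add_right_comm]
  have g_rot : HasUniformRotation g 0 := by
    have := ((HasUniformRotation.of_rot_subset hrot.subset).iterate hq).add_intCast (deck (-r))
    rw [g_eq]
    convert this using 1
    push_cast
    field_simp
    ring
  obtain ⟨z, hz⟩ := exists_fixedPoint_of_hasUniformRotation (hμ.iterate q) g_semiconj g_deck g_rot
    (hlift.hasSymmLogSlope_pow_add_const hiso q _)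
  refine ⟨z, ?_⟩
  simpa [g_eq, ← sub_eq_add_neg, Prod.ext_iff, sub_eq_iff_eq_add] using hz

/-- If the rotation set of the lift `f̌` is reduced to a single rational number `r/s`,
then this rational number is realized by a periodic orbit. -/
theorem rotation_set_singleton_realized (f : Ann ≃ₜ Ann) (μ : Measure Ann)
    (hiso : IsotopicToId f) (hμ : InvariantFullMeasure f μ)
    (fc : (ℝ × ℝ) ≃ₜ (ℝ × ℝ)) (hlift : IsLift f fc)
    (r s : ℤ) (hs : 1 ≤ s) (hcop : Int.gcd r s = 1)
    (hrot : rot fc = {(((r : ℝ) / (s : ℝ) : ℝ) : EReal)}) :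
    ∃ z : ℝ × ℝ, (⇑fc)^[s.toNat] z = z + ((r : ℝ), 0) := by
  obtain ⟨hprob, hmap, -⟩ := hμ
  exact rotation_set_singleton_realized_general f μ hiso ⟨f.continuous.measurable, hmap⟩ fc hlift
    r s hs hrot
end
end

section
/- There exists a homeomorphism f of the open annulus 𝔸 = 𝕋¹ × ℝ which is irrotational, preserves a Borel probability measure of full support, and, denoting by f̌ its irrotational lift to ℝ², satisfies: (1) there is an open topological disk U ⊆ 𝔸 with π(Fix(f̌)) ⊆ U; and (2) there exists a compact set K₀ ⊆ 𝔸 such that for every real number M > 0 there exist a point ž ∈ ℝ² and an integer n ≥ 1 with ž ∈ π⁻¹(K₀), f̌ⁿ(ž) ∈ π⁻¹(K₀), and |p₁(f̌ⁿ(ž)) − p₁(ž)| ≥ M. -/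
open MeasureTheory Filter Topology Set

noncomputable section

/-!
The flow of `θ' = -Z cos θ / (1 + Z²)`, `Z' = sin θ` is, in suitable coordinates, a rotation of the
unit sphere, so its periodic points are dense, and averaging over countably many periodic orbits
gives an invariant probability measure of full support. Only the orbits on the lines `cos θ = 0` are
not periodic; they run at unit speed from one end of the `Z`-axis to the other.

Now shear the `θ`-coordinate by `√(1 + |Z|)`, push the end `Z = ∞` to a curve `exp (-y) = fence x`,
and add rest points beyond that curve. The shear makes the escaping orbit wind about `√n` times
around the annulus in time `n`: this is sublinear, so that the rotation set is `{0}`, but unbounded,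
and whenever the orbit crosses the line above `x = 1/4`, where the curve is at finite height, it is
in a fixed compact set. The curve goes to infinity only above `x = -1/4`, because `fence` vanishes
there, so that line contains no added rest point. The other fixed points of the time-one map come
from the centers `sin θ = Z = 0` and lie above `x = 0` and `x = 1/2`. Hence the annulus cut along
the line above `x = -1/4` is the required disk.
-/

section Flows

variable {τ X Y : Type*} [TopologicalSpace τ] [AddMonoid τ] [TopologicalSpace X]
  [TopologicalSpace Y]

lemma exists_isSemiconjugacy_of_isOpenQuotientMap {q : X → Y} (hq : IsOpenQuotientMap q)
    (φ : Flow τ X) (hφ : ∀ t x y, q x = q y → q (φ t x) = q (φ t y)) :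
    ∃ ψ : Flow τ Y, Flow.IsSemiconjugacy q φ ψ := by
  let ψ : τ → Y → Y := fun t y => q (φ t (Function.surjInv hq.surjective y))
  have hψ : ∀ t x, ψ t (q x) = q (φ t x) := fun t x =>
    hφ t _ _ (Function.surjInv_eq hq.surjective (q x))
  refine ⟨⟨ψ, ?_, fun s t y => ?_, fun y => ?_⟩, hq.continuous, hq.surjective,
    fun t x => (hψ t x).symm⟩
  · rw [(IsOpenQuotientMap.id.prodMap hq).isQuotientMap.continuous_iff]
    exact (hq.continuous.comp φ.cont').congr fun p => (hψ p.1 p.2).symm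
  · obtain ⟨x, rfl⟩ := hq.surjective y
    change ψ (s + t) (q x) = ψ s (ψ t (q x))
    rw [hψ t, hψ s, hψ, φ.map_add]
  · obtain ⟨x, rfl⟩ := hq.surjective y
    rw [hψ, φ.map_zero_apply]

lemma continuous_extend_id {T : Type*} [TopologicalSpace T] {e : Y → X} (he : IsOpenEmbedding e)
    {F : T → Y → X} (hF : Continuous fun p : T × Y => F p.1 p.2)
    (hlim : ∀ t, ∀ b ∉ range e,
      Tendsto (fun p : T × Y => F p.1 p.2) (𝓝 t ×ˢ comap e (𝓝 b)) (𝓝 b)) :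
    Continuous fun p : T × X => Function.extend e (F p.1) id p.2 := by
  refine continuous_iff_continuousAt.2 fun ⟨t, x⟩ => ?_
  by_cases hx : x ∈ range e
  · obtain ⟨y, rfl⟩ := hx
    refine ((IsOpenEmbedding.id.prodMap he).continuousAt_iff (x := (t, y))).1 ?_
    exact hF.continuousAt.congr
      (.of_forall fun p => (he.injective.extend_apply (F p.1) id p.2).symm)
  · have hnear : Tendsto (fun p : T × X => Function.extend e (F p.1) id p.2)
        (𝓝 t ×ˢ (𝓝[range e] x ⊔ 𝓝[(range e)ᶜ] x)) (𝓝 x) := by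
      rw [Filter.prod_sup, tendsto_sup, nhdsWithin, ← Filter.map_comap, ← Filter.map_id (f := 𝓝 t),
        Filter.prod_map_map_eq, tendsto_map'_iff]
      constructor
      · exact (hlim t x hx).congr fun p => (he.injective.extend_apply (F p.1) id p.2).symm
      · refine Tendsto.congr' ?_ (tendsto_snd.mono_right nhdsWithin_le_nhds)
        filter_upwards [tendsto_snd.eventually self_mem_nhdsWithin] with p hp
        exact (Function.extend_apply' (F p.1) id p.2 hp).symm
    rw [← nhdsWithin_union, union_compl_self, nhdsWithin_univ, ← nhds_prod_eq] at hnear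
    simpa only [ContinuousAt, Function.extend_apply' _ _ _ hx, id] using hnear

/-- Transported to the range of `e`, the flow `φ` converges to the identity at every point outside
the range. This is what makes the extension by rest points continuous. -/
def TendstoIdOffRange (e : Y → X) (φ : Flow τ Y) : Prop :=
  ∀ t, ∀ b ∉ range e, Tendsto (fun p : τ × Y => e (φ p.1 p.2)) (𝓝 t ×ˢ comap e (𝓝 b)) (𝓝 b)

/-- The flow on `X` that is conjugate to `φ` by the open embedding `e` on the range of `e` and
rests everywhere else. -/
def extendFlow {e : Y → X} (he : IsOpenEmbedding e) (φ : Flow τ Y) (hφ : TendstoIdOffRange e φ) :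
    Flow τ X where
  toFun t := Function.extend e (e ∘ φ t) id
  cont' := continuous_extend_id (F := fun t => e ∘ φ t) he (he.continuous.comp φ.cont') hφ
  map_add' s t x := by
    by_cases hx : x ∈ range e
    · obtain ⟨y, rfl⟩ := hx
      simp only [he.injective.extend_apply, Function.comp_apply, φ.map_add]
    · simp only [Function.extend_apply' _ _ _ hx, id]
  map_zero' x := by
    by_cases hx : x ∈ range e
    · obtain ⟨y, rfl⟩ := hx
      simp only [he.injective.extend_apply, Function.comp_apply, φ.map_zero_apply]
    · rw [Function.extend_apply' _ _ _ hx, id]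

section ExtendFlow

variable {e : Y → X} {he : IsOpenEmbedding e} {φ : Flow τ Y} {hφ : TendstoIdOffRange e φ}

lemma extendFlow_apply (t : τ) (y : Y) : extendFlow he φ hφ t (e y) = e (φ t y) :=
  he.injective.extend_apply _ _ _

lemma extendFlow_of_notMem_range (t : τ) {x : X} (hx : x ∉ range e) :
    extendFlow he φ hφ t x = x :=
  Function.extend_apply' _ _ _ hx

lemma commute_extendFlow {a : Y → Y} {b : X → X} (hab : Function.Semiconj e a b)
    (hb : ∀ x, b x ∈ range e → x ∈ range e) {t : τ} (ha : Function.Commute a (φ t)) :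
    Function.Commute b (extendFlow he φ hφ t) := by
  intro x
  by_cases hx : x ∈ range e
  · obtain ⟨y, rfl⟩ := hx
    rw [extendFlow_apply, ← hab y, ← hab (φ t y), extendFlow_apply, ha y]
  · rw [extendFlow_of_notMem_range t hx, extendFlow_of_notMem_range t (mt (hb x) hx)]

end ExtendFlow

end Flows

section PeriodicPoints

variable {X Y : Type*} [TopologicalSpace X] [TopologicalSpace Y]

/-- The periodic points of a flow, rest points included. -/
def flowPeriodicPts (φ : Flow ℝ X) : Set X := {x | ∃ T : ℝ, 0 < T ∧ φ T x = x}

lemma dense_flowPeriodicPts_of_isSemiconjugacy {q : X → Y} {φ : Flow ℝ X} {ψ : Flow ℝ Y}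
    (hq : Flow.IsSemiconjugacy q φ ψ) (hφ : Dense (flowPeriodicPts φ)) :
    Dense (flowPeriodicPts ψ) := by
  refine (hq.surj.denseRange.dense_image hq.cont hφ).mono ?_
  rintro _ ⟨x, ⟨T, hT, hx⟩, rfl⟩
  exact ⟨T, hT, by rw [← hq.semiconj T x, hx]⟩

lemma dense_flowPeriodicPts_extendFlow {e : Y → X} {he : IsOpenEmbedding e} {φ : Flow ℝ Y}
    {hφ : TendstoIdOffRange e φ} (hper : Dense (flowPeriodicPts φ)) :
    Dense (flowPeriodicPts (extendFlow he φ hφ)) := by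
  intro x
  by_cases hx : x ∈ range e
  · refine closure_mono ?_ (he.continuous.range_subset_closure_image_dense hper hx)
    rintro _ ⟨y, ⟨T, hT, hy⟩, rfl⟩
    exact ⟨T, hT, by rw [extendFlow_apply, hy]⟩
  · exact subset_closure ⟨1, one_pos, extendFlow_of_notMem_range 1 hx⟩

lemma iterate_toHomeomorph_one (φ : Flow ℝ X) (n : ℕ) (x : X) :
    (φ.toHomeomorph 1)^[n] x = φ n x := by
  induction n with
  | zero => simp
  | succ n ih =>
    rw [Function.iterate_succ_apply', ih, φ.toHomeomorph_apply, ← φ.map_add, add_comm,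
      Nat.cast_succ]

end PeriodicPoints

section InvariantMeasures

lemma isProbabilityMeasure_sum_geometric {X : Type*} [MeasurableSpace X]
    (ν : ℕ → Measure X) [∀ n, IsProbabilityMeasure (ν n)] :
    IsProbabilityMeasure (Measure.sum fun n => (2⁻¹ : ENNReal) ^ (n + 1) • ν n) := by
  constructor
  simp only [Measure.sum_apply _ MeasurableSet.univ, Measure.smul_apply, measure_univ,
    smul_eq_mul, mul_one, ENNReal.tsum_geometric_add_one, ENNReal.one_sub_inv_two, inv_inv]
  exact ENNReal.inv_mul_cancel two_ne_zero ENNReal.ofNat_ne_top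

variable {X : Type*} [TopologicalSpace X] [MeasurableSpace X] [BorelSpace X]

/-- The normalized time-`T` average along the orbit of `x` is the image of the Haar measure on
`ℝ/Tℤ`, on which `φ t` acts as the translation by `t`. -/
lemma exists_invariant_measure_of_mem_flowPeriodicPts {φ : Flow ℝ X} {x : X}
    (hx : x ∈ flowPeriodicPts φ) :
    ∃ ν : Measure X, IsProbabilityMeasure ν ∧ (∀ t, MeasurePreserving (φ t) ν ν) ∧
      ∀ U : Set X, IsOpen U → x ∈ U → 0 < ν U := by
  obtain ⟨T, hT, hTx⟩ := hx
  have : Fact (0 < T) := ⟨hT⟩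
  have hper : Function.Periodic (fun s => φ s x) T := fun s => by
    simp only [φ.map_add, hTx]
  let γ : AddCircle T → X := hper.lift
  have hγ : Continuous γ :=
    continuous_coinduced_dom.2 (φ.continuous continuous_id continuous_const)
  have hφγ : ∀ t, φ t ∘ γ = γ ∘ (· + (t : AddCircle T)) := by
    refine fun t => funext fun c => ?_
    induction c using QuotientAddGroup.induction_on with
    | H s =>
      change φ t (φ s x) = φ (s + t) x
      rw [← φ.map_add, add_comm]
  refine ⟨Measure.map γ AddCircle.haarAddCircle,
    Measure.isProbabilityMeasure_map hγ.measurable.aemeasurable, fun t => ?_, fun U hU hxU => ?_⟩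
  · refine ⟨(φ.continuous_toFun t).measurable, ?_⟩
    rw [Measure.map_map (φ.continuous_toFun t).measurable hγ.measurable, hφγ,
      ← Measure.map_map hγ.measurable (measurable_add_const _), map_add_right_eq_self]
  · rw [Measure.map_apply hγ.measurable hU.measurableSet]
    refine (hU.preimage hγ).measure_pos _ ⟨((0 : ℝ) : AddCircle T), ?_⟩
    change φ 0 x ∈ U
    rwa [φ.map_zero_apply]

lemma exists_invariant_measure_of_dense_flowPeriodicPts [SecondCountableTopology X] [Nonempty X]
    {φ : Flow ℝ X} (hφ : Dense (flowPeriodicPts φ)) :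
    ∃ μ : Measure X, IsProbabilityMeasure μ ∧ (∀ t, MeasurePreserving (φ t) μ μ) ∧
      μ.IsOpenPosMeasure := by
  obtain ⟨D, hDper, hDcount, hD⟩ := hφ.exists_countable_dense_subset
  obtain ⟨x, rfl⟩ := hDcount.exists_eq_range hD.nonempty
  choose ν hνprob hνφ hνpos using fun n =>
    exists_invariant_measure_of_mem_flowPeriodicPts (hDper (mem_range_self n))
  refine ⟨_, isProbabilityMeasure_sum_geometric ν, fun t => ?_, ⟨fun U hU hUne => ?_⟩⟩
  · refine ⟨(hνφ 0 t).measurable, ?_⟩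
    rw [Measure.map_sum (hνφ 0 t).measurable.aemeasurable]
    simp only [Measure.map_smul, (hνφ _ t).map_eq]
  · obtain ⟨_, ⟨n, rfl⟩, hxU⟩ := hD.exists_mem_open hU hUne
    rw [Measure.sum_apply _ hU.measurableSet]
    refine ((ENNReal.le_tsum n).trans_lt' ?_).ne'
    exact ENNReal.mul_pos (pow_ne_zero _ (by simp)) (hνpos n U hU hxU).ne'

end InvariantMeasures

section GenSin

/-- The solution `s ↦ sin (h * s) / h` of `y'' = -h² y`, `y 0 = 0`, `y' 0 = 1`, extended
continuously to `h = 0`. -/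
def genSin (h s : ℝ) : ℝ := s * Real.sinc (h * s)

lemma mul_genSin (h s : ℝ) : h * genSin h s = Real.sin (h * s) := by
  by_cases hs : h * s = 0
  · rw [genSin, ← mul_assoc, hs, zero_mul, Real.sin_zero]
  · rw [genSin, Real.sinc_of_ne_zero hs, ← mul_assoc, mul_div_cancel₀ _ hs]

lemma genSin_zero_left (s : ℝ) : genSin 0 s = s := by
  rw [genSin, zero_mul, Real.sinc_zero, mul_one]

lemma genSin_zero_right (h : ℝ) : genSin h 0 = 0 := zero_mul _

lemma genSin_add (h s t : ℝ) :
    genSin h (s + t) = genSin h s * Real.cos (h * t) + Real.cos (h * s) * genSin h t := by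
  obtain rfl | hh := eq_or_ne h 0
  · simp only [genSin_zero_left, zero_mul, Real.cos_zero, mul_one, one_mul]
  · refine mul_left_cancel₀ hh ?_
    rw [mul_genSin, mul_add, mul_add, Real.sin_add, ← mul_genSin h s, ← mul_genSin h t]
    ring

lemma abs_genSin_le (h s : ℝ) : |genSin h s| ≤ |s| := by
  rw [genSin, abs_mul]
  exact mul_le_of_le_one_right (abs_nonneg s) (Real.abs_sinc_le_one _)

lemma continuous_genSin : Continuous fun p : ℝ × ℝ => genSin p.1 p.2 :=
  continuous_snd.mul (Real.continuous_sinc.comp (continuous_fst.mul continuous_snd))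

end GenSin

section TurnTo

open Real

lemma abs_coe_sign_le_one (σ : SignType) : |(σ : ℝ)| ≤ 1 := by
  cases σ <;> simp

/-- The angle with sine `y` that is reached from `θ` without leaving the interval between
consecutive zeros of the cosine; if `cos θ = 0`, the angle does not move. -/
def turnTo (θ y : ℝ) : ℝ := θ + SignType.sign (cos θ) * (arcsin y - arcsin (sin θ))

variable {θ y : ℝ}

lemma turnTo_of_cos_eq_zero (hθ : cos θ = 0) (y : ℝ) : turnTo θ y = θ := by
  simp [turnTo, hθ]

lemma turnTo_sin (θ : ℝ) : turnTo θ (sin θ) = θ := by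
  simp [turnTo]

lemma turnTo_add_int_mul_two_pi (θ y : ℝ) (k : ℤ) :
    turnTo (θ + k * (2 * π)) y = turnTo θ y + k * (2 * π) := by
  simp only [turnTo, cos_add_int_mul_two_pi, sin_add_int_mul_two_pi]
  ring

lemma abs_turnTo_sub_le (θ y : ℝ) : |turnTo θ y - θ| ≤ |arcsin y - arcsin (sin θ)| := by
  rw [turnTo, add_sub_cancel_left, abs_mul]
  exact mul_le_of_le_one_left (abs_nonneg _) (abs_coe_sign_le_one _)

lemma sin_cos_sub_sign_mul_arcsin_sin (hθ : cos θ ≠ 0) :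
    sin (θ - SignType.sign (cos θ) * arcsin (sin θ)) = 0 ∧
      cos (θ - SignType.sign (cos θ) * arcsin (sin θ)) = SignType.sign (cos θ) := by
  have hsin : sin (arcsin (sin θ)) = sin θ := sin_arcsin (neg_one_le_sin θ) (sin_le_one θ)
  have hcos : cos (arcsin (sin θ)) = |cos θ| := by
    rw [cos_arcsin, ← cos_sq', sqrt_sq_eq_abs]
  obtain hneg | hpos := lt_or_gt_of_ne hθ
  · simp only [sign_neg hneg, SignType.coe_neg_one, neg_one_mul, sub_neg_eq_add, sin_add, cos_add,
      hsin, hcos, abs_of_neg hneg]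
    constructor <;> linarith [sin_sq_add_cos_sq θ]
  · simp only [sign_pos hpos, SignType.coe_one, one_mul, sin_sub, cos_sub, hsin, hcos,
      abs_of_pos hpos]
    constructor <;> linarith [sin_sq_add_cos_sq θ]

lemma turnTo_eq_sub_add (θ y : ℝ) : turnTo θ y =
    θ - SignType.sign (cos θ) * arcsin (sin θ) + SignType.sign (cos θ) * arcsin y := by
  rw [turnTo, mul_sub, sub_add_eq_add_sub, add_sub_assoc]

lemma sin_turnTo (hθ : cos θ ≠ 0) (hy : y ∈ Icc (-1) 1) : sin (turnTo θ y) = y := by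
  obtain ⟨hsin, hcos⟩ := sin_cos_sub_sign_mul_arcsin_sin hθ
  rw [turnTo_eq_sub_add, sin_add, hsin, hcos]
  obtain hneg | hpos := lt_or_gt_of_ne hθ
  · simp [sign_neg hneg, sin_arcsin hy.1 hy.2]
  · simp [sign_pos hpos, sin_arcsin hy.1 hy.2]

lemma cos_turnTo (θ y : ℝ) : cos (turnTo θ y) = SignType.sign (cos θ) * √(1 - y ^ 2) := by
  obtain hθ | hθ := eq_or_ne (cos θ) 0
  · rw [turnTo_of_cos_eq_zero hθ, hθ, _root_.sign_zero, SignType.coe_zero, zero_mul]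
  obtain ⟨hsin, hcos⟩ := sin_cos_sub_sign_mul_arcsin_sin hθ
  rw [turnTo_eq_sub_add, cos_add, hsin, hcos, ← cos_arcsin]
  obtain hneg | hpos := lt_or_gt_of_ne hθ
  · simp [sign_neg hneg]
  · simp [sign_pos hpos]

lemma turnTo_turnTo (hy : y ∈ Ioo (-1) 1) (θ w : ℝ) : turnTo (turnTo θ y) w = turnTo θ w := by
  obtain hθ | hθ := eq_or_ne (cos θ) 0
  · rw [turnTo_of_cos_eq_zero hθ]
  have hroot : 0 < √(1 - y ^ 2) := sqrt_pos.2 (by nlinarith [hy.1, hy.2])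
  have hsign : SignType.sign (cos (turnTo θ y)) = SignType.sign (cos θ) := by
    rw [cos_turnTo, sign_mul, sign_pos hroot, mul_one]
    obtain hneg | hpos := lt_or_gt_of_ne hθ
    · simp [sign_neg hneg]
    · simp [sign_pos hpos]
  rw [turnTo, hsign, sin_turnTo hθ (Ioo_subset_Icc_self hy), turnTo, turnTo]
  ring

variable {X : Type*} [TopologicalSpace X]

lemma continuous_sign_mul {f g : X → ℝ} (hf : Continuous f) (hg : Continuous g)
    (hfg : ∀ x, f x = 0 → g x = 0) : Continuous fun x => (SignType.sign (f x) : ℝ) * g x := by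
  refine continuous_iff_continuousAt.2 fun x => ?_
  by_cases hx : f x = 0
  · have hlim : Tendsto (fun x => |g x|) (𝓝 x) (𝓝 0) := by
      simpa only [hfg x hx, abs_zero] using hg.abs.tendsto x
    rw [ContinuousAt, hfg x hx, mul_zero]
    refine squeeze_zero_norm (fun z => ?_) hlim
    rw [norm_eq_abs, abs_mul]
    exact mul_le_of_le_one_left (abs_nonneg _) (abs_coe_sign_le_one _)
  · have hsign : ContinuousAt (fun x => (SignType.sign (f x) : ℝ)) x :=
      (continuous_of_discreteTopology (f := fun σ : SignType => (σ : ℝ))).continuousAt.comp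
        ((continuousAt_sign_of_ne_zero hx).comp hf.continuousAt)
    exact hsign.mul hg.continuousAt

lemma continuous_turnTo_comp {f g : X → ℝ} (hf : Continuous f) (hg : Continuous g)
    (hfg : ∀ x, cos (f x) = 0 → g x = sin (f x)) : Continuous fun x => turnTo (f x) (g x) := by
  refine hf.add (continuous_sign_mul (continuous_cos.comp hf)
    ((continuous_arcsin.comp hg).sub (continuous_arcsin.comp (continuous_sin.comp hf))) ?_)
  intro x hx
  rw [hfg x hx, sub_self]

end TurnTo

section EddyFlow

open Real

/-- The conserved quantity of `eddyFlow`, which is also the angular speed of the motion. -/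
def eddySpeed (p : ℝ × ℝ) : ℝ := cos p.1 / √(1 + p.2 ^ 2)

/-- The sine of the angle at time `s` of the orbit of `p` under `eddyFlow`. -/
def eddySin (s : ℝ) (p : ℝ × ℝ) : ℝ :=
  cos (eddySpeed p * s) * sin p.1 - sin (eddySpeed p * s) * (eddySpeed p * p.2)

/-- The second coordinate at time `s` of the orbit of `p` under `eddyFlow`. -/
def eddyHeight (s : ℝ) (p : ℝ × ℝ) : ℝ :=
  genSin (eddySpeed p) s * sin p.1 + cos (eddySpeed p * s) * p.2

/-- The time-`s` map of `eddyFlow`. -/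
def eddyMap (s : ℝ) (p : ℝ × ℝ) : ℝ × ℝ := (turnTo p.1 (eddySin s p), eddyHeight s p)

variable {s : ℝ} {p : ℝ × ℝ}

lemma sqrt_one_add_sq_pos (x : ℝ) : 0 < √(1 + x ^ 2) := by positivity

lemma eddySpeed_mul_sqrt (p : ℝ × ℝ) : eddySpeed p * √(1 + p.2 ^ 2) = cos p.1 :=
  div_mul_cancel₀ _ (sqrt_one_add_sq_pos p.2).ne'

lemma eddySpeed_eq_zero_iff : eddySpeed p = 0 ↔ cos p.1 = 0 :=
  div_eq_zero_iff.trans (or_iff_left (sqrt_one_add_sq_pos p.2).ne')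

lemma sign_cos_eq_sign_eddySpeed (p : ℝ × ℝ) :
    SignType.sign (cos p.1) = SignType.sign (eddySpeed p) := by
  rw [← eddySpeed_mul_sqrt, sign_mul, sign_pos (sqrt_one_add_sq_pos p.2), mul_one]

lemma sin_sq_add_eddySpeed_mul_sq (p : ℝ × ℝ) :
    sin p.1 ^ 2 + (eddySpeed p * p.2) ^ 2 = 1 - eddySpeed p ^ 2 := by
  have hcos : eddySpeed p ^ 2 * (1 + p.2 ^ 2) = cos p.1 ^ 2 := by
    rw [← eddySpeed_mul_sqrt, mul_pow, sq_sqrt (by positivity)]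
  linarith [sin_sq_add_cos_sq p.1]

lemma eddySpeed_mul_eddyHeight (s : ℝ) (p : ℝ × ℝ) : eddySpeed p * eddyHeight s p =
    sin (eddySpeed p * s) * sin p.1 + cos (eddySpeed p * s) * (eddySpeed p * p.2) := by
  rw [eddyHeight, ← mul_genSin]
  ring

lemma eddySin_sq_add_eddySpeed_mul_sq (s : ℝ) (p : ℝ × ℝ) :
    eddySin s p ^ 2 + (eddySpeed p * eddyHeight s p) ^ 2 = 1 - eddySpeed p ^ 2 := by
  rw [eddySpeed_mul_eddyHeight, eddySin, ← sin_sq_add_eddySpeed_mul_sq]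
  linear_combination (sin p.1 ^ 2 + (eddySpeed p * p.2) ^ 2) * sin_sq_add_cos_sq (eddySpeed p * s)

lemma eddySin_mem_Icc (s : ℝ) (p : ℝ × ℝ) : eddySin s p ∈ Icc (-1) 1 :=
  abs_le.1 (sq_le_one_iff_abs_le_one _ |>.1
    (by nlinarith [eddySin_sq_add_eddySpeed_mul_sq s p, sq_nonneg (eddySpeed p)]))

lemma eddySin_mem_Ioo (s : ℝ) (hp : cos p.1 ≠ 0) : eddySin s p ∈ Ioo (-1) 1 := by
  have hspeed : 0 < eddySpeed p ^ 2 := by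
    have := eddySpeed_eq_zero_iff.not.2 hp
    positivity
  exact abs_lt.1 (sq_lt_one_iff_abs_lt_one _ |>.1
    (by nlinarith [eddySin_sq_add_eddySpeed_mul_sq s p]))

lemma eddySin_of_cos_eq_zero (s : ℝ) (hp : cos p.1 = 0) : eddySin s p = sin p.1 := by
  simp [eddySin, eddySpeed_eq_zero_iff.2 hp]

lemma eddyMap_of_cos_eq_zero (s : ℝ) (hp : cos p.1 = 0) :
    eddyMap s p = (p.1, s * sin p.1 + p.2) := by
  simp [eddyMap, turnTo_of_cos_eq_zero hp, eddyHeight, eddySpeed_eq_zero_iff.2 hp,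
    genSin_zero_left]

lemma sin_eddyMap_fst (s : ℝ) (p : ℝ × ℝ) : sin (eddyMap s p).1 = eddySin s p := by
  obtain hp | hp := eq_or_ne (cos p.1) 0
  · rw [eddyMap_of_cos_eq_zero s hp, eddySin_of_cos_eq_zero s hp]
  · exact sin_turnTo hp (eddySin_mem_Icc s p)

lemma cos_eddyMap_fst (s : ℝ) (p : ℝ × ℝ) :
    cos (eddyMap s p).1 = eddySpeed p * √(1 + (eddyMap s p).2 ^ 2) := by
  have hsq : 1 - eddySin s p ^ 2 = eddySpeed p ^ 2 * (1 + eddyHeight s p ^ 2) := by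
    linear_combination -eddySin_sq_add_eddySpeed_mul_sq s p
  rw [eddyMap, cos_turnTo, hsq, sqrt_mul (sq_nonneg _), sqrt_sq_eq_abs, ← mul_assoc,
    sign_cos_eq_sign_eddySpeed, sign_mul_abs]

lemma eddySpeed_eddyMap (s : ℝ) (p : ℝ × ℝ) : eddySpeed (eddyMap s p) = eddySpeed p := by
  rw [eddySpeed, cos_eddyMap_fst, mul_div_cancel_right₀ _ (sqrt_one_add_sq_pos _).ne']

lemma eddySin_eddyMap (s t : ℝ) (p : ℝ × ℝ) :
    eddySin s (eddyMap t p) = eddySin (s + t) p := by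
  rw [eddySin, eddySpeed_eddyMap, sin_eddyMap_fst]
  change _ - _ * (_ * eddyHeight t p) = _
  rw [eddySpeed_mul_eddyHeight, eddySin, eddySin, mul_add (eddySpeed p), sin_add, cos_add]
  ring

lemma eddyHeight_eddyMap (s t : ℝ) (p : ℝ × ℝ) :
    eddyHeight s (eddyMap t p) = eddyHeight (s + t) p := by
  rw [eddyHeight, eddySpeed_eddyMap, sin_eddyMap_fst]
  change _ + _ * eddyHeight t p = _
  rw [eddySin, eddyHeight, eddyHeight, genSin_add, mul_add (eddySpeed p), cos_add,
    ← mul_genSin _ s, ← mul_genSin _ t]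
  ring

lemma eddyMap_add (s t : ℝ) (p : ℝ × ℝ) : eddyMap (s + t) p = eddyMap s (eddyMap t p) := by
  refine Prod.ext ?_ (eddyHeight_eddyMap s t p).symm
  change turnTo p.1 _ = turnTo (turnTo p.1 _) (eddySin s (eddyMap t p))
  rw [eddySin_eddyMap]
  obtain hp | hp := eq_or_ne (cos p.1) 0
  · simp only [turnTo_of_cos_eq_zero hp]
  · rw [turnTo_turnTo (eddySin_mem_Ioo t hp)]

lemma continuous_eddySpeed : Continuous eddySpeed :=
  (continuous_cos.comp continuous_fst).div (by fun_prop) fun p => (sqrt_one_add_sq_pos p.2).ne'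

lemma continuous_eddyMap : Continuous fun q : ℝ × ℝ × ℝ => eddyMap q.1 q.2 := by
  have hspeed : Continuous fun q : ℝ × ℝ × ℝ => eddySpeed q.2 :=
    continuous_eddySpeed.comp continuous_snd
  have hsin : Continuous fun q : ℝ × ℝ × ℝ => eddySin q.1 q.2 := by
    unfold eddySin
    fun_prop
  refine (continuous_turnTo_comp (by fun_prop) hsin fun q hq =>
    eddySin_of_cos_eq_zero q.1 hq).prodMk ?_
  refine .add (.mul ?_ (by fun_prop)) (by fun_prop)
  exact continuous_genSin.comp (hspeed.prodMk continuous_fst)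

/-- The flow of `θ' = -Z cos θ / (1 + Z²)`, `Z' = sin θ`. In terms of
`(sin θ, eddySpeed * Z, eddySpeed)`, the point of the unit sphere with latitude `θ` and longitude
`arctan Z`, it is the rotation about the third axis with angular speed the third coordinate. -/
def eddyFlow : Flow ℝ (ℝ × ℝ) where
  toFun := eddyMap
  cont' := continuous_eddyMap
  map_add' := eddyMap_add
  map_zero' p := by simp [eddyMap, eddySin, eddyHeight, genSin_zero_right, turnTo_sin]

lemma eddyFlow_apply (s : ℝ) (p : ℝ × ℝ) : eddyFlow s p = eddyMap s p := rfl

lemma eddyFlow_add_int_mul_two_pi (s : ℝ) (p : ℝ × ℝ) (k : ℤ) :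
    eddyFlow s (p + ((k : ℝ) * (2 * π), 0)) = eddyFlow s p + ((k : ℝ) * (2 * π), 0) := by
  simp [eddyFlow_apply, eddyMap, eddySin, eddyHeight, eddySpeed, turnTo_add_int_mul_two_pi]

lemma eddyFlow_pi_div_two (s : ℝ) : eddyFlow s (π / 2, 0) = (π / 2, s) := by
  simp [eddyFlow_apply, eddyMap_of_cos_eq_zero]

lemma mem_flowPeriodicPts_eddyFlow (hp : cos p.1 ≠ 0) : p ∈ flowPeriodicPts eddyFlow := by
  have hspeed : eddySpeed p ≠ 0 := eddySpeed_eq_zero_iff.not.2 hp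
  let T := 2 * π / |eddySpeed p|
  have hT : 0 < T := div_pos two_pi_pos (abs_pos.2 hspeed)
  have hcos : cos (eddySpeed p * T) = 1 := by
    rw [← cos_abs, abs_mul, abs_of_pos hT, mul_div_cancel₀ _ (abs_ne_zero.2 hspeed), cos_two_pi]
  have hsin : sin (eddySpeed p * T) = 0 := sin_eq_zero_iff_cos_eq.2 (.inl hcos)
  have hgenSin : genSin (eddySpeed p) T = 0 :=
    (mul_eq_zero_iff_left hspeed).1 ((mul_genSin _ _).trans hsin)
  refine ⟨T, hT, ?_⟩
  simp [eddyFlow_apply, eddyMap, eddySin, eddyHeight, hcos, hsin, hgenSin, turnTo_sin]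

lemma dense_setOf_cos_ne_zero : Dense {θ : ℝ | cos θ ≠ 0} := by
  have hcount : {θ : ℝ | cos θ = 0}.Countable :=
    (countable_range fun k : ℤ => (2 * k + 1) * π / 2).mono fun θ hθ => by
      obtain ⟨k, hk⟩ := cos_eq_zero_iff.1 hθ
      exact ⟨k, hk.symm⟩
  exact hcount.dense_compl ℝ

lemma dense_flowPeriodicPts_eddyFlow : Dense (flowPeriodicPts eddyFlow) :=
  (dense_setOf_cos_ne_zero.preimage (isOpenMap_fst (Y := ℝ))).mono fun _ =>
    mem_flowPeriodicPts_eddyFlow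

lemma abs_eddySpeed_le (p : ℝ × ℝ) : |eddySpeed p| ≤ 1 / √(1 + p.2 ^ 2) := by
  rw [eddySpeed, abs_div, abs_of_pos (sqrt_one_add_sq_pos p.2)]
  gcongr
  exact abs_cos_le_one p.1

lemma abs_eddySpeed_le_one (p : ℝ × ℝ) : |eddySpeed p| ≤ 1 :=
  abs_le_one_iff_mul_self_le_one.2
    (by nlinarith [sin_sq_add_eddySpeed_mul_sq p, sq_nonneg (eddySpeed p * p.2)])

lemma abs_eddySpeed_mul_snd_le_one (p : ℝ × ℝ) : |eddySpeed p * p.2| ≤ 1 :=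
  abs_le_one_iff_mul_self_le_one.2
    (by nlinarith [sin_sq_add_eddySpeed_mul_sq p, sq_nonneg (sin p.1), sq_nonneg (eddySpeed p)])

lemma abs_cos_sub_one_le (x : ℝ) : |cos x - 1| ≤ |x| := by
  simpa using abs_cos_sub_cos_le x 0

lemma eq_zero_and_eq_zero_of_rotation_fixed {α x y : ℝ} (hα : cos α ≠ 1)
    (hx : cos α * x - sin α * y = x) (hy : sin α * x + cos α * y = y) : x = 0 ∧ y = 0 := by
  have hsum : x ^ 2 + y ^ 2 = 0 := by
    refine (mul_eq_zero_iff_left (sub_ne_zero.2 hα)).1 ?_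
    linear_combination x * hx + y * hy
  constructor <;> nlinarith [sq_nonneg x, sq_nonneg y]

lemma cos_eddySpeed_mul_ne_one (hs₀ : s ≠ 0) (hs : |s| < 2 * π) (hp : cos p.1 ≠ 0) :
    cos (eddySpeed p * s) ≠ 1 := by
  have hlt : |eddySpeed p * s| < 2 * π := by
    rw [abs_mul]
    exact (mul_le_of_le_one_left (abs_nonneg s) (abs_eddySpeed_le_one p)).trans_lt hs
  rw [Ne, cos_eq_one_iff_of_lt_of_lt (abs_lt.1 hlt).1 (abs_lt.1 hlt).2]
  exact mul_ne_zero (eddySpeed_eq_zero_iff.not.2 hp) hs₀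

lemma cos_ne_zero_of_eddyFlow_eq_self (hs : s ≠ 0) (hfix : eddyFlow s p = p) : cos p.1 ≠ 0 := by
  intro hp
  rw [eddyFlow_apply, eddyMap_of_cos_eq_zero s hp] at hfix
  have hheight : s * sin p.1 + p.2 = p.2 := congrArg Prod.snd hfix
  have hsin : sin p.1 = 0 := by simpa [hs] using hheight
  simpa [hp, hsin] using sin_sq_add_cos_sq p.1

lemma sin_eq_zero_and_snd_eq_zero_of_eddyFlow_eq_self (hs₀ : s ≠ 0) (hs : |s| < 2 * π)
    (hfix : eddyFlow s p = p) : sin p.1 = 0 ∧ p.2 = 0 := by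
  have hp : cos p.1 ≠ 0 := cos_ne_zero_of_eddyFlow_eq_self hs₀ hfix
  rw [eddyFlow_apply] at hfix
  have hsin : eddySin s p = sin p.1 := by rw [← sin_eddyMap_fst, hfix]
  have hheight : eddyHeight s p = p.2 := congrArg Prod.snd hfix
  obtain ⟨hsin_zero, hmul_zero⟩ :=
    eq_zero_and_eq_zero_of_rotation_fixed (cos_eddySpeed_mul_ne_one hs₀ hs hp) hsin
      ((eddySpeed_mul_eddyHeight s p).symm.trans (by rw [hheight]))
  exact ⟨hsin_zero, (mul_eq_zero_iff_left (eddySpeed_eq_zero_iff.not.2 hp)).1 hmul_zero⟩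

lemma abs_eddyFlow_fst_sub_le (s : ℝ) (p : ℝ × ℝ) :
    |(eddyFlow s p).1 - p.1| ≤ |arcsin (eddySin s p) - arcsin (sin p.1)| :=
  abs_turnTo_sub_le _ _

lemma abs_eddyFlow_fst_sub_le_pi (s : ℝ) (p : ℝ × ℝ) : |(eddyFlow s p).1 - p.1| ≤ π := by
  refine (abs_eddyFlow_fst_sub_le s p).trans (abs_le.2 ⟨?_, ?_⟩) <;>
    linarith [neg_pi_div_two_le_arcsin (eddySin s p), arcsin_le_pi_div_two (eddySin s p),
      neg_pi_div_two_le_arcsin (sin p.1), arcsin_le_pi_div_two (sin p.1)]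

lemma abs_eddyFlow_snd_sub_le (s : ℝ) (p : ℝ × ℝ) : |(eddyFlow s p).2 - p.2| ≤ 2 * |s| := by
  have hgenSin : |genSin (eddySpeed p) s * sin p.1| ≤ |s| := by
    rw [abs_mul]
    exact (mul_le_of_le_one_right (abs_nonneg _) (abs_sin_le_one _)).trans (abs_genSin_le _ _)
  have hcos : |(cos (eddySpeed p * s) - 1) * p.2| ≤ |s| :=
    calc |(cos (eddySpeed p * s) - 1) * p.2|
        ≤ |eddySpeed p * s| * |p.2| := by
          rw [abs_mul]
          exact mul_le_mul_of_nonneg_right (abs_cos_sub_one_le _) (abs_nonneg _)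
      _ = |eddySpeed p * p.2| * |s| := by rw [abs_mul, abs_mul, mul_right_comm]
      _ ≤ |s| := mul_le_of_le_one_left (abs_nonneg s) (abs_eddySpeed_mul_snd_le_one p)
  calc |(eddyFlow s p).2 - p.2|
      = |genSin (eddySpeed p) s * sin p.1 + (cos (eddySpeed p * s) - 1) * p.2| := by
        rw [eddyFlow_apply, eddyMap, eddyHeight]
        congr 1
        ring
    _ ≤ |s| + |s| := (abs_add_le _ _).trans (add_le_add hgenSin hcos)
    _ = 2 * |s| := (two_mul _).symm

lemma abs_eddySin_sub_sin_le (s : ℝ) (p : ℝ × ℝ) :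
    |eddySin s p - sin p.1| ≤ 2 * |eddySpeed p * s| := by
  have hcos : |(cos (eddySpeed p * s) - 1) * sin p.1| ≤ |eddySpeed p * s| := by
    rw [abs_mul]
    exact (mul_le_of_le_one_right (abs_nonneg _) (abs_sin_le_one _)).trans (abs_cos_sub_one_le _)
  have hsin : |sin (eddySpeed p * s) * (eddySpeed p * p.2)| ≤ |eddySpeed p * s| := by
    rw [abs_mul]
    exact (mul_le_of_le_one_right (abs_nonneg _) (abs_eddySpeed_mul_snd_le_one p)).trans
      abs_sin_le_abs
  calc |eddySin s p - sin p.1|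
      = |(cos (eddySpeed p * s) - 1) * sin p.1
          - sin (eddySpeed p * s) * (eddySpeed p * p.2)| := by
        rw [eddySin]
        congr 1
        ring
    _ ≤ |eddySpeed p * s| + |eddySpeed p * s| := (abs_sub _ _).trans (add_le_add hcos hsin)
    _ = 2 * |eddySpeed p * s| := (two_mul _).symm

lemma tendsto_dist_comp_of_uniformContinuous {ι X Y : Type*} [PseudoMetricSpace X]
    [PseudoMetricSpace Y] {f : X → Y} (hf : UniformContinuous f) {l : Filter ι} {u v : ι → X}
    (huv : Tendsto (fun i => dist (u i) (v i)) l (𝓝 0)) :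
    Tendsto (fun i => dist (f (u i)) (f (v i))) l (𝓝 0) := by
  have hunif : Tendsto (fun i => (u i, v i)) l (uniformity X) :=
    tendsto_uniformity_iff_dist_tendsto_zero.2 huv
  exact tendsto_uniformity_iff_dist_tendsto_zero.1 (Tendsto.comp hf hunif)

lemma uniformContinuous_arcsin : UniformContinuous arcsin := by
  have hIcc : UniformContinuous fun x : Icc (-1 : ℝ) 1 => arcsin x :=
    CompactSpace.uniformContinuous_of_continuous (by fun_prop)
  simpa only [Function.comp_def, arcsin_projIcc] using
    hIcc.comp (LipschitzWith.projIcc (neg_le_self zero_le_one)).uniformContinuous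

lemma tendsto_eddySpeed_comap_snd_atTop : Tendsto eddySpeed (comap Prod.snd atTop) (𝓝 0) := by
  have hroot : Tendsto (fun x : ℝ => √(1 + x ^ 2)) atTop atTop :=
    tendsto_sqrt_atTop.comp (tendsto_atTop_add_const_left _ 1 (tendsto_pow_atTop two_ne_zero))
  refine squeeze_zero_norm (a := fun p : ℝ × ℝ => 1 / √(1 + p.2 ^ 2)) abs_eddySpeed_le ?_
  simpa only [one_div, Function.comp_def] using
    (tendsto_inv_atTop_zero.comp hroot).comp tendsto_comap

lemma tendsto_dist_eddySin_sin (s : ℝ) :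
    Tendsto (fun q : ℝ × ℝ × ℝ => dist (eddySin q.1 q.2) (sin q.2.1))
      (𝓝 s ×ˢ comap Prod.snd atTop) (𝓝 0) := by
  have hangle : Tendsto (fun q : ℝ × ℝ × ℝ => eddySpeed q.2 * q.1)
      (𝓝 s ×ˢ comap Prod.snd atTop) (𝓝 0) := by
    simpa only [zero_mul, Function.comp_apply] using
      (tendsto_eddySpeed_comap_snd_atTop.comp tendsto_snd).mul (tendsto_fst (f := 𝓝 s))
  have hbound : Tendsto (fun q : ℝ × ℝ × ℝ => 2 * |eddySpeed q.2 * q.1|)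
      (𝓝 s ×ˢ comap Prod.snd atTop) (𝓝 0) := by
    simpa only [abs_zero, mul_zero] using hangle.abs.const_mul 2
  exact squeeze_zero (fun _ => dist_nonneg) (fun q => abs_eddySin_sub_sin_le q.1 q.2) hbound

lemma tendsto_eddyFlow_fst_sub_fst (s : ℝ) :
    Tendsto (fun q : ℝ × ℝ × ℝ => (eddyFlow q.1 q.2).1 - q.2.1)
      (𝓝 s ×ˢ comap Prod.snd atTop) (𝓝 0) := by
  have harcsin : Tendsto
      (fun q : ℝ × ℝ × ℝ => dist (arcsin (eddySin q.1 q.2)) (arcsin (sin q.2.1)))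
      (𝓝 s ×ˢ comap Prod.snd atTop) (𝓝 0) :=
    tendsto_dist_comp_of_uniformContinuous uniformContinuous_arcsin (tendsto_dist_eddySin_sin s)
  exact squeeze_zero_norm (fun q => abs_eddyFlow_fst_sub_le q.1 q.2) harcsin

end EddyFlow

section SpiralFlow

open Real

/-- The amount by which `spiralChart` shears the second coordinate `Z` along the first. It is
unbounded, but varies less and less as `Z → ∞`. -/
def lag (Z : ℝ) : ℝ := √(1 + |Z|)

lemma continuous_lag : Continuous lag := by
  unfold lag
  fun_prop

lemma lag_pos (Z : ℝ) : 0 < lag Z := sqrt_pos.2 (by positivity)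

lemma abs_lag_sub_mul_add (a b : ℝ) : |lag a - lag b| * (lag a + lag b) ≤ |a - b| := by
  have hsq : ∀ Z, lag Z ^ 2 = 1 + |Z| := fun Z => sq_sqrt (by positivity)
  rw [← abs_of_pos (add_pos (lag_pos a) (lag_pos b)), ← abs_mul, mul_comm, ← sq_sub_sq, hsq, hsq,
    add_sub_add_left_eq_sub]
  exact abs_abs_sub_abs_le a b

lemma abs_lag_sub_le_sqrt (a b : ℝ) : |lag a - lag b| ≤ √|a - b| := by
  have hle : |lag a - lag b| ≤ lag a + lag b :=
    (abs_sub _ _).trans_eq (by rw [abs_of_pos (lag_pos a), abs_of_pos (lag_pos b)])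
  refine le_sqrt_of_sq_le ?_
  rw [sq]
  exact (mul_le_mul_of_nonneg_left hle (abs_nonneg _)).trans (abs_lag_sub_mul_add a b)

lemma abs_lag_sub_le_div (a b : ℝ) : |lag a - lag b| ≤ |a - b| / lag b := by
  rw [le_div_iff₀ (lag_pos b)]
  refine (mul_le_mul_of_nonneg_left ?_ (abs_nonneg _)).trans (abs_lag_sub_mul_add a b)
  exact le_add_of_nonneg_left (lag_pos a).le

/-- A nonnegative `1`-periodic function that vanishes exactly on the class of `-1/4`. The points
`(x, y)` with `exp (-y) ≤ fence x` are the rest points that `spiralFlow` adds to `eddyFlow`. -/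
def fence (x : ℝ) : ℝ := 1 + sin (2 * π * x)

lemma fence_nonneg (x : ℝ) : 0 ≤ fence x := by
  rw [fence]
  linarith [neg_one_le_sin (2 * π * x)]

lemma exp_add_fence_pos (a x : ℝ) : 0 < exp a + fence x :=
  add_pos_of_pos_of_nonneg (exp_pos a) (fence_nonneg x)

lemma continuous_fence : Continuous fence := by
  unfold fence
  fun_prop

lemma fence_add_intCast (x : ℝ) (k : ℤ) : fence (x + k) = fence x := by
  rw [fence, fence, mul_add, mul_comm (2 * π) k, sin_add_int_mul_two_pi]

/-- The first coordinate of `spiralChart`. -/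
def spiralAngle (p : ℝ × ℝ) : ℝ := p.1 / (2 * π) + lag p.2

lemma continuous_spiralAngle : Continuous spiralAngle :=
  (continuous_fst.div_const _).add (continuous_lag.comp continuous_snd)

/-- The coordinates in which `eddyFlow` becomes `spiralFlow`: the line `Z = const` is sheared by
`lag Z`, and the end `Z = ∞` is pushed to the curve `exp (-y) = fence x`. That curve escapes to
infinity only above the class of `-1/4`. -/
def spiralChart : OpenPartialHomeomorph (ℝ × ℝ) (ℝ × ℝ) where
  toFun p := (spiralAngle p, -log (exp (-p.2) + fence (spiralAngle p)))
  invFun z := (2 * π * (z.1 - lag (-log (exp (-z.2) - fence z.1))),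
    -log (exp (-z.2) - fence z.1))
  source := univ
  target := {z | fence z.1 < exp (-z.2)}
  map_source' p _ := by
    change fence _ < exp (- -log _)
    rw [neg_neg, exp_log (exp_add_fence_pos _ _)]
    exact lt_add_of_pos_left _ (exp_pos _)
  map_target' _ _ := mem_univ _
  left_inv' p _ := by
    simp only [neg_neg, exp_log (exp_add_fence_pos _ _), add_sub_cancel_right, log_exp]
    rw [spiralAngle, add_sub_cancel_right, mul_div_cancel₀ _ two_pi_pos.ne']
  right_inv' z hz := by
    simp only [spiralAngle, neg_neg, exp_log (sub_pos.2 hz)]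
    rw [mul_div_cancel_left₀ _ two_pi_pos.ne', sub_add_cancel, sub_add_cancel, log_exp, neg_neg]
  open_source := isOpen_univ
  open_target := isOpen_lt (continuous_fence.comp continuous_fst) (by fun_prop)
  continuousOn_toFun := by
    have hx := continuous_spiralAngle
    have hfence := continuous_fence
    refine (hx.prodMk (Continuous.log (by fun_prop) fun p => ?_).neg).continuousOn
    exact (exp_add_fence_pos _ _).ne'
  continuousOn_invFun := by
    have hlag := continuous_lag
    have hfence := continuous_fence
    have hheight : ContinuousOn (fun z : ℝ × ℝ => -log (exp (-z.2) - fence z.1))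
        {z | fence z.1 < exp (-z.2)} :=
      (ContinuousOn.log (by fun_prop) fun z hz => (sub_pos.2 hz).ne').neg
    exact (by fun_prop : ContinuousOn _ _).prodMk hheight

lemma spiralChart_apply (p : ℝ × ℝ) :
    spiralChart p = (spiralAngle p, -log (exp (-p.2) + fence (spiralAngle p))) := rfl

lemma spiralChart_fst (p : ℝ × ℝ) : (spiralChart p).1 = spiralAngle p := rfl

lemma exp_neg_spiralChart_snd (p : ℝ × ℝ) :
    exp (-(spiralChart p).2) = exp (-p.2) + fence (spiralAngle p) := by
  rw [spiralChart_apply, neg_neg, exp_log (exp_add_fence_pos _ _)]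

lemma isOpenEmbedding_spiralChart : IsOpenEmbedding spiralChart :=
  spiralChart.isOpenEmbedding rfl

lemma mem_range_spiralChart {z : ℝ × ℝ} : z ∈ range spiralChart ↔ fence z.1 < exp (-z.2) := by
  have hrange : range spiralChart = spiralChart.target :=
    image_univ.symm.trans spiralChart.image_source_eq_target
  rw [hrange]
  rfl

lemma spiralChart_add_int_mul_two_pi (p : ℝ × ℝ) (k : ℤ) :
    spiralChart (p + ((k : ℝ) * (2 * π), 0)) = spiralChart p + ((k : ℝ), 0) := by
  have hangle : spiralAngle (p + ((k : ℝ) * (2 * π), 0)) = spiralAngle p + k := by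
    simp only [spiralAngle, Prod.fst_add, Prod.snd_add, add_zero, add_div,
      mul_div_cancel_right₀ _ two_pi_pos.ne']
    ring
  simp only [spiralChart_apply, hangle, fence_add_intCast, Prod.snd_add, add_zero, Prod.mk_add_mk]

lemma tendsto_snd_comap_spiralChart {b : ℝ × ℝ} (hb : b ∉ range spiralChart) :
    Tendsto Prod.snd (comap spiralChart (𝓝 b)) atTop := by
  have hfence := continuous_fence
  have hcont : Continuous fun z : ℝ × ℝ => exp (-z.2) - fence z.1 := by fun_prop
  have hexp : Tendsto (fun p : ℝ × ℝ => exp (-p.2)) (comap spiralChart (𝓝 b))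
      (𝓝 (exp (-b.2) - fence b.1)) := by
    refine ((hcont.tendsto b).comp tendsto_comap).congr fun p => ?_
    rw [Function.comp_apply, exp_neg_spiralChart_snd, spiralChart_fst, add_sub_cancel_right]
  have hle : exp (-b.2) - fence b.1 ≤ 0 := sub_nonpos.2 (not_lt.1 (mt mem_range_spiralChart.2 hb))
  refine tendsto_atTop.2 fun M => ?_
  filter_upwards [hexp.eventually_lt_const (hle.trans_lt (exp_pos (-M)))] with p hp
  exact (neg_lt_neg_iff.1 (exp_lt_exp.1 hp)).le

lemma tendsto_eddyFlow_snd_atTop (t : ℝ) :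
    Tendsto (fun q : ℝ × ℝ × ℝ => (eddyFlow q.1 q.2).2) (𝓝 t ×ˢ comap Prod.snd atTop) atTop := by
  have hheight : Tendsto (fun q : ℝ × ℝ × ℝ => q.2.2) (𝓝 t ×ˢ comap Prod.snd atTop) atTop :=
    tendsto_comap.comp tendsto_snd
  have htime : Tendsto (fun q : ℝ × ℝ × ℝ => -(2 * |q.1|)) (𝓝 t ×ˢ comap Prod.snd atTop)
      (𝓝 (-(2 * |t|))) := (tendsto_fst.abs.const_mul 2).neg
  refine tendsto_atTop_mono (fun q => ?_) (hheight.atTop_add htime)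
  linarith [(abs_le.1 (abs_eddyFlow_snd_sub_le q.1 q.2)).1]

lemma tendsto_lag_eddyFlow_sub_lag (t : ℝ) :
    Tendsto (fun q : ℝ × ℝ × ℝ => lag (eddyFlow q.1 q.2).2 - lag q.2.2)
      (𝓝 t ×ˢ comap Prod.snd atTop) (𝓝 0) := by
  have hlag : Tendsto lag atTop atTop :=
    tendsto_sqrt_atTop.comp (tendsto_atTop_add_const_left _ 1 tendsto_abs_atTop_atTop)
  have hbound : Tendsto (fun q : ℝ × ℝ × ℝ => 2 * |q.1| / lag q.2.2)
      (𝓝 t ×ˢ comap Prod.snd atTop) (𝓝 0) :=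
    (tendsto_fst.abs.const_mul 2).div_atTop (hlag.comp (tendsto_comap.comp tendsto_snd))
  refine squeeze_zero_norm (fun q => (abs_lag_sub_le_div _ _).trans ?_) hbound
  exact div_le_div_of_nonneg_right (abs_eddyFlow_snd_sub_le q.1 q.2) (lag_pos _).le

lemma tendsto_spiralAngle_eddyFlow_sub (t : ℝ) :
    Tendsto (fun q : ℝ × ℝ × ℝ => spiralAngle (eddyFlow q.1 q.2) - spiralAngle q.2)
      (𝓝 t ×ˢ comap Prod.snd atTop) (𝓝 0) := by
  have hsum := ((tendsto_eddyFlow_fst_sub_fst t).div_const (2 * π)).add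
    (tendsto_lag_eddyFlow_sub_lag t)
  rw [zero_div, zero_add] at hsum
  refine hsum.congr fun q => ?_
  rw [spiralAngle, spiralAngle]
  ring

lemma tendsto_spiralChart_of_tendsto_spiralAngle_sub {ι : Type*} {l : Filter ι}
    {u v : ι → ℝ × ℝ} {b : ℝ × ℝ} (hu : Tendsto (fun i => spiralChart (u i)) l (𝓝 b))
    (hu₂ : Tendsto (fun i => (u i).2) l atTop) (hv₂ : Tendsto (fun i => (v i).2) l atTop)
    (huv : Tendsto (fun i => spiralAngle (v i) - spiralAngle (u i)) l (𝓝 0)) :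
    Tendsto (fun i => spiralChart (v i)) l (𝓝 b) := by
  have hangle_u : Tendsto (fun i => spiralAngle (u i)) l (𝓝 b.1) :=
    (continuous_fst.tendsto b).comp hu
  have hangle_v : Tendsto (fun i => spiralAngle (v i)) l (𝓝 b.1) := by
    simpa using hangle_u.add huv
  have hfence : Tendsto (fun i => fence (spiralAngle (v i)) - fence (spiralAngle (u i))) l
      (𝓝 0) := by
    simpa using ((continuous_fence.tendsto _).comp hangle_v).sub
      ((continuous_fence.tendsto _).comp hangle_u)
  have hexp : Tendsto (fun i => exp (-(v i).2) - exp (-(u i).2)) l (𝓝 0) := by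
    simpa using (tendsto_exp_neg_atTop_nhds_zero.comp hv₂).sub
      (tendsto_exp_neg_atTop_nhds_zero.comp hu₂)
  have hexp_u : Tendsto (fun i => exp (-(spiralChart (u i)).2)) l (𝓝 (exp (-b.2))) :=
    (continuous_exp.comp continuous_snd.neg).tendsto b |>.comp hu
  have hexp_v : Tendsto (fun i => exp (-(spiralChart (v i)).2)) l (𝓝 (exp (-b.2))) := by
    have hsum := (hexp_u.add hexp).add hfence
    rw [add_zero, add_zero] at hsum
    refine hsum.congr fun i => ?_
    rw [exp_neg_spiralChart_snd, exp_neg_spiralChart_snd]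
    ring
  refine hangle_v.prodMk_nhds (y := b.2) ?_
  simpa [spiralChart_apply, exp_neg_spiralChart_snd] using (hexp_v.log (exp_ne_zero _)).neg

lemma tendstoIdOffRange_spiralChart_eddyFlow : TendstoIdOffRange spiralChart eddyFlow := by
  intro t b hb
  have hend : 𝓝 t ×ˢ comap spiralChart (𝓝 b) ≤ 𝓝 t ×ˢ comap Prod.snd atTop :=
    prod_mono le_rfl (tendsto_snd_comap_spiralChart hb).le_comap
  exact tendsto_spiralChart_of_tendsto_spiralAngle_sub (tendsto_comap.comp tendsto_snd)
    ((tendsto_snd_comap_spiralChart hb).comp tendsto_snd)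
    ((tendsto_eddyFlow_snd_atTop t).mono_left hend)
    ((tendsto_spiralAngle_eddyFlow_sub t).mono_left hend)

/-- The flow on the universal cover of the annulus whose time-one map is the irrotational lift: in
`spiralChart` it is `eddyFlow`, and it rests at all other points. -/
def spiralFlow : Flow ℝ (ℝ × ℝ) :=
  extendFlow isOpenEmbedding_spiralChart eddyFlow tendstoIdOffRange_spiralChart_eddyFlow

lemma spiralFlow_spiralChart (t : ℝ) (p : ℝ × ℝ) :
    spiralFlow t (spiralChart p) = spiralChart (eddyFlow t p) :=
  extendFlow_apply t p

lemma spiralFlow_of_exp_le_fence (t : ℝ) {z : ℝ × ℝ} (hz : exp (-z.2) ≤ fence z.1) :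
    spiralFlow t z = z :=
  extendFlow_of_notMem_range t (mt mem_range_spiralChart.1 hz.not_gt)

lemma dense_flowPeriodicPts_spiralFlow : Dense (flowPeriodicPts spiralFlow) :=
  dense_flowPeriodicPts_extendFlow dense_flowPeriodicPts_eddyFlow

lemma spiralFlow_add_intCast (t : ℝ) (z : ℝ × ℝ) (k : ℤ) :
    spiralFlow t (z + ((k : ℝ), 0)) = spiralFlow t z + ((k : ℝ), 0) := by
  have hcommute : Function.Commute (· + ((k : ℝ), (0 : ℝ))) (spiralFlow t) := by
    refine commute_extendFlow (a := (· + ((k : ℝ) * (2 * π), 0)))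
      (fun p => spiralChart_add_int_mul_two_pi p k) (fun w hw => ?_)
      fun p => (eddyFlow_add_int_mul_two_pi t p k).symm
    rw [mem_range_spiralChart] at hw ⊢
    simpa [fence_add_intCast] using hw
  exact (hcommute z).symm

lemma abs_spiralFlow_fst_sub_le (t : ℝ) (z : ℝ × ℝ) :
    |(spiralFlow t z).1 - z.1| ≤ 1 / 2 + √(2 * |t|) := by
  obtain hz | ⟨p, rfl⟩ : exp (-z.2) ≤ fence z.1 ∨ z ∈ range spiralChart :=
    (le_or_gt _ _).imp_right mem_range_spiralChart.2
  · rw [spiralFlow_of_exp_le_fence t hz, sub_self, abs_zero]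
    positivity
  rw [spiralFlow_spiralChart, spiralChart_fst, spiralChart_fst]
  have hangle : |((eddyFlow t p).1 - p.1) / (2 * π)| ≤ 1 / 2 := by
    rw [abs_div, abs_of_pos two_pi_pos, div_le_iff₀ two_pi_pos]
    linarith [abs_eddyFlow_fst_sub_le_pi t p]
  have hlag : |lag (eddyFlow t p).2 - lag p.2| ≤ √(2 * |t|) :=
    (abs_lag_sub_le_sqrt _ _).trans (sqrt_le_sqrt (abs_eddyFlow_snd_sub_le t p))
  calc |spiralAngle (eddyFlow t p) - spiralAngle p|
      = |((eddyFlow t p).1 - p.1) / (2 * π) + (lag (eddyFlow t p).2 - lag p.2)| := by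
        rw [spiralAngle, spiralAngle]
        congr 1
        ring
    _ ≤ 1 / 2 + √(2 * |t|) := (abs_add_le _ _).trans (add_le_add hangle hlag)

lemma fence_ne_zero_of_spiralFlow_one_eq_self {z : ℝ × ℝ} (hz : spiralFlow 1 z = z) :
    fence z.1 ≠ 0 := by
  obtain hrest | ⟨p, rfl⟩ : exp (-z.2) ≤ fence z.1 ∨ z ∈ range spiralChart :=
    (le_or_gt _ _).imp_right mem_range_spiralChart.2
  · exact ((exp_pos _).trans_le hrest).ne'
  have hfix : eddyFlow 1 p = p :=
    isOpenEmbedding_spiralChart.injective ((spiralFlow_spiralChart 1 p).symm.trans hz)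
  obtain ⟨hsin, hheight⟩ := sin_eq_zero_and_snd_eq_zero_of_eddyFlow_eq_self one_ne_zero
    (by linarith [abs_one (α := ℝ), pi_gt_three]) hfix
  have hangle : 2 * π * spiralAngle p = p.1 + 2 * π := by
    simp only [spiralAngle, lag, hheight, abs_zero, add_zero, sqrt_one]
    field_simp
  rw [spiralChart_fst, fence, hangle, sin_add_two_pi, hsin]
  norm_num

end SpiralFlow

section Annulus

lemma coe_T1_eq_coe_iff {x y : ℝ} : (x : T1) = (y : T1) ↔ ∃ k : ℤ, y = x + k := by
  refine (QuotientAddGroup.eq.trans AddSubgroup.mem_zmultiples_iff).trans (exists_congr fun k => ?_)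
  rw [zsmul_one, eq_neg_add_iff_add_eq, eq_comm]

lemma pA_eq_pA_iff {z w : ℝ × ℝ} : pA z = pA w ↔ ∃ k : ℤ, w = z + ((k : ℝ), 0) := by
  simp only [pA, Prod.ext_iff, coe_T1_eq_coe_iff, Prod.fst_add, Prod.snd_add, add_zero,
    exists_and_right, eq_comm (a := z.2)]

lemma isOpenQuotientMap_pA : IsOpenQuotientMap pA :=
  QuotientAddGroup.isOpenQuotientMap_mk.prodMap IsOpenQuotientMap.id

lemma exists_isSemiconjugacy_pA {φ : Flow ℝ (ℝ × ℝ)}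
    (hφ : ∀ t z (k : ℤ), φ t (z + ((k : ℝ), 0)) = φ t z + ((k : ℝ), 0)) :
    ∃ ψ : Flow ℝ Ann, Flow.IsSemiconjugacy pA φ ψ := by
  refine exists_isSemiconjugacy_of_isOpenQuotientMap isOpenQuotientMap_pA φ fun t z w hzw => ?_
  obtain ⟨k, rfl⟩ := pA_eq_pA_iff.1 hzw
  exact pA_eq_pA_iff.2 ⟨k, hφ t z k⟩

lemma isotopicToId_toHomeomorph (ψ : Flow ℝ Ann) (t : ℝ) : IsotopicToId (ψ.toHomeomorph t) := by
  refine ⟨fun q => ψ (q.1 * t) q.2, ?_, fun z => ?_, fun z => ?_, fun r _ => ?_⟩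
  · exact (ψ.continuous (continuous_fst.mul continuous_const) continuous_snd).continuousOn
  · simp only [zero_mul, ψ.map_zero_apply]
  · simp only [one_mul, ψ.toHomeomorph_apply]
  · exact ⟨ψ.toHomeomorph (r * t), fun z => (ψ.toHomeomorph_apply _ z).symm⟩

lemma isLift_toHomeomorph {φ : Flow ℝ (ℝ × ℝ)} {ψ : Flow ℝ Ann}
    (h : Flow.IsSemiconjugacy pA φ ψ) (t : ℝ) : IsLift (ψ.toHomeomorph t) (φ.toHomeomorph t) :=
  h.semiconj t

lemma exists_invariantFullMeasure_toHomeomorph {ψ : Flow ℝ Ann}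
    (hψ : Dense (flowPeriodicPts ψ)) (t : ℝ) :
    ∃ μ : Measure Ann, InvariantFullMeasure (ψ.toHomeomorph t) μ := by
  obtain ⟨μ, hprob, hinv, hpos⟩ := exists_invariant_measure_of_dense_flowPeriodicPts hψ
  exact ⟨μ, hprob, (hinv t).map_eq, fun U hU hne => hU.measure_pos μ hne⟩

lemma rot_eq_singleton_zero {fc : (ℝ × ℝ) ≃ₜ (ℝ × ℝ)} {g : ℕ → ℝ}
    (hg : Tendsto (fun n => g n / n) atTop (𝓝 0))
    (hdisp : ∀ n z, |(fc^[n] z).1 - z.1| ≤ g n) (hfix : (Function.fixedPoints fc).Nonempty) :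
    rot fc = {0} := by
  refine subset_antisymm (closure_minimal (iUnion₂_subset ?_) isClosed_singleton)
    (singleton_subset_iff.2 (subset_closure (mem_iUnion₂.2 ?_)))
  · rintro K - ρ ⟨z, n, hn, -, hρ⟩
    have hzero : Tendsto (fun k => ((fc^[n k] (z k)).1 - (z k).1) / (n k)) atTop (𝓝 0) := by
      refine squeeze_zero_norm (fun k => ?_) (hg.comp hn)
      rw [Real.norm_eq_abs, abs_div, Nat.abs_cast]
      exact div_le_div_of_nonneg_right (hdisp _ _) (Nat.cast_nonneg _)
    exact tendsto_nhds_unique hρ (EReal.tendsto_coe.2 hzero)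
  · obtain ⟨z, hz⟩ := hfix
    refine ⟨{pA z}, isCompact_singleton, fun _ => z, fun k => k, tendsto_id, fun k => ?_, ?_⟩
    · rw [Function.iterate_fixed hz]
      exact ⟨rfl, rfl⟩
    · simp [Function.iterate_fixed hz]

lemma isOpenTopDisk_setOf_fst_ne (a : ℝ) : IsOpenTopDisk {z : Ann | z.1 ≠ (a : T1)} := by
  let e := (AddCircle.openPartialHomeomorphCoe (1 : ℝ) a).prod (OpenPartialHomeomorph.refl ℝ)
  have htarget : e.target = {z : Ann | z.1 ≠ (a : T1)} := by
    ext z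
    simp [e]
  have hsource : e.source = Ioo a (a + 1) ×ˢ (univ : Set ℝ) := by
    ext z
    simp [e]
  have hcontr_source : ContractibleSpace e.source := by
    rw [hsource]
    exact ((convex_Ioo a (a + 1)).prod convex_univ).contractibleSpace
      ((nonempty_Ioo.2 (lt_add_one a)).prod univ_nonempty)
  have hcontr : ContractibleSpace e.target := e.toHomeomorphSourceTarget.symm.contractibleSpace
  rw [← htarget]
  exact ⟨e.open_target, isConnected_iff_connectedSpace.2 inferInstance, inferInstance⟩

end Annulus

section SpiralAnnulus

open Real

lemma fence_eq_zero_of_coe_eq {x : ℝ} (hx : (x : T1) = ((-(1 / 4) : ℝ) : T1)) : fence x = 0 := by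
  obtain ⟨k, hk⟩ := coe_T1_eq_coe_iff.1 hx
  rw [← fence_add_intCast x k, ← hk, fence, show 2 * π * -(1 / 4) = -(π / 2) by ring, sin_neg,
    sin_pi_div_two, add_neg_cancel]

lemma pA_image_fixedPoints_spiralFlow_subset :
    pA '' Function.fixedPoints (spiralFlow.toHomeomorph 1) ⊆
      {z : Ann | z.1 ≠ ((-(1 / 4) : ℝ) : T1)} := by
  rintro _ ⟨z, hz, rfl⟩ hfst
  exact fence_ne_zero_of_spiralFlow_one_eq_self hz (fence_eq_zero_of_coe_eq hfst)

lemma fence_one_div_four : fence (1 / 4) = 2 := by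
  rw [fence, show 2 * π * (1 / 4) = π / 2 by ring, sin_pi_div_two, one_add_one_eq_two]

lemma rot_spiralFlow_toHomeomorph_one : rot (spiralFlow.toHomeomorph 1) = {0} := by
  have hsqrt : Tendsto (fun n : ℕ => √(n : ℝ)) atTop atTop :=
    tendsto_sqrt_atTop.comp tendsto_natCast_atTop_atTop
  refine rot_eq_singleton_zero (g := fun n => 1 / 2 + √(2 * n)) ?_ (fun n z => ?_)
    ⟨(1 / 4, 0), ?_⟩
  · have hlim := (tendsto_const_div_atTop_nhds_zero_nat (1 / 2 : ℝ)).add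
      (hsqrt.const_div_atTop √2)
    rw [add_zero] at hlim
    refine hlim.congr fun n => ?_
    rw [add_div, sqrt_mul zero_le_two, mul_div_assoc, sqrt_div_self', mul_one_div]
  · simpa only [iterate_toHomeomorph_one, Nat.abs_cast] using abs_spiralFlow_fst_sub_le n z
  · refine spiralFlow_of_exp_le_fence 1 ?_
    simp only [neg_zero, exp_zero, fence_one_div_four, one_le_two]

lemma lag_sq_add_two_mul (m : ℕ) : lag ((m ^ 2 + 2 * m : ℕ) : ℝ) = m + 1 := by
  rw [lag, Nat.abs_cast, ← sqrt_sq (by positivity : (0 : ℝ) ≤ m + 1)]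
  congr 1
  push_cast
  ring

lemma spiralAngle_pi_div_two (m : ℕ) :
    spiralAngle (π / 2, ((m ^ 2 + 2 * m : ℕ) : ℝ)) = 1 / 4 + ((m + 1 : ℤ) : ℝ) := by
  rw [spiralAngle, lag_sq_add_two_mul]
  push_cast
  field_simp
  ring

/-- The compact set to which the orbit of `spiralChart (π / 2, 0)` returns at the times
`m ^ 2 + 2 * m`, each time after `m` turns around the annulus. -/
def returnSegment : Set Ann := {((1 / 4 : ℝ) : T1)} ×ˢ Icc (-2 : ℝ) 0

lemma isCompact_returnSegment : IsCompact returnSegment :=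
  isCompact_singleton.prod isCompact_Icc

lemma pA_spiralChart_pi_div_two_mem_returnSegment (m : ℕ) :
    pA (spiralChart (π / 2, ((m ^ 2 + 2 * m : ℕ) : ℝ))) ∈ returnSegment := by
  rw [spiralChart_apply, spiralAngle_pi_div_two, fence_add_intCast, fence_one_div_four]
  set r := exp (-((m ^ 2 + 2 * m : ℕ) : ℝ))
  have hr_pos : 0 < r := exp_pos _
  have hr_le : r ≤ 1 := exp_le_one_iff.2 (neg_nonpos.2 (Nat.cast_nonneg _))
  refine ⟨(coe_T1_eq_coe_iff.2 ⟨m + 1, rfl⟩).symm, (?_ : -2 ≤ -log (r + 2)),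
    (?_ : -log (r + 2) ≤ 0)⟩
  · linarith [log_le_sub_one_of_pos (by linarith : 0 < r + 2)]
  · linarith [log_nonneg (by linarith : 1 ≤ r + 2)]

lemma exists_le_abs_spiralFlow_sub {M : ℝ} (hM : 0 < M) :
    ∃ (z : ℝ × ℝ) (n : ℕ), 1 ≤ n ∧ pA z ∈ returnSegment ∧ pA (spiralFlow n z) ∈ returnSegment ∧
      M ≤ |(spiralFlow n z).1 - z.1| := by
  obtain ⟨m, hm⟩ := exists_nat_ge M
  have hm_pos : 0 < m := Nat.cast_pos.1 (hM.trans_le hm)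
  have horbit : spiralFlow ((m ^ 2 + 2 * m : ℕ) : ℝ) (spiralChart (π / 2, 0)) =
      spiralChart (π / 2, ((m ^ 2 + 2 * m : ℕ) : ℝ)) := by
    rw [spiralFlow_spiralChart, eddyFlow_pi_div_two]
  refine ⟨spiralChart (π / 2, 0), m ^ 2 + 2 * m, Nat.one_le_iff_ne_zero.2 (by positivity),
    ?_, ?_, ?_⟩
  · simpa using pA_spiralChart_pi_div_two_mem_returnSegment 0
  · rw [horbit]
    exact pA_spiralChart_pi_div_two_mem_returnSegment m
  · have hstart : spiralAngle (π / 2, 0) = 1 / 4 + 1 := by simpa using spiralAngle_pi_div_two 0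
    rw [horbit, spiralChart_fst, spiralChart_fst, spiralAngle_pi_div_two, hstart]
    push_cast
    rw [add_sub_add_left_eq_sub, add_sub_cancel_right, Nat.abs_cast]
    exact hm

end SpiralAnnulus

/-- **Proposition 5.2.** There is an irrotational measure-preserving homeomorphism
`f_none` of the open annulus whose lifted fixed point set projects into an open
topological disk, and for which the unbounded displacement already occurs within a
single compact set. -/
theorem exists_f_none :
    ∃ (f : Ann ≃ₜ Ann) (fc : (ℝ × ℝ) ≃ₜ (ℝ × ℝ)) (μ : Measure Ann),
      IsotopicToId f ∧ InvariantFullMeasure f μ ∧ IsLift f fc ∧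
      rot fc = {(0 : EReal)} ∧
      (∃ U : Set Ann, IsOpenTopDisk U ∧ pA '' Function.fixedPoints fc ⊆ U) ∧
      (∃ K₀ : Set Ann, IsCompact K₀ ∧ ∀ M : ℝ, 0 < M →
        ∃ (zc : ℝ × ℝ) (n : ℕ), 1 ≤ n ∧ pA zc ∈ K₀ ∧ pA ((⇑fc)^[n] zc) ∈ K₀ ∧
          M ≤ |((⇑fc)^[n] zc).1 - zc.1|) := by
  obtain ⟨ψ, hψ⟩ := exists_isSemiconjugacy_pA spiralFlow_add_intCast
  obtain ⟨μ, hμ⟩ := exists_invariantFullMeasure_toHomeomorph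
    (dense_flowPeriodicPts_of_isSemiconjugacy hψ dense_flowPeriodicPts_spiralFlow) 1
  refine ⟨ψ.toHomeomorph 1, spiralFlow.toHomeomorph 1, μ, isotopicToId_toHomeomorph ψ 1, hμ,
    isLift_toHomeomorph hψ 1, rot_spiralFlow_toHomeomorph_one,
    ⟨_, isOpenTopDisk_setOf_fst_ne _, pA_image_fixedPoints_spiralFlow_subset⟩,
    ⟨_, isCompact_returnSegment, fun M hM => ?_⟩⟩
  simpa only [iterate_toHomeomorph_one] using exists_le_abs_spiralFlow_sub hM
end
end
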